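/- Let U be a shifted order ideal of monomials of degree at most (d+1)/2 on [m], m = n−d−1, and work in characteristic 0. Then U(S_d(U)) = {u ∈ U : deg u ≤ d/2}, where U(Γ) = {monomials u in x_1,…,x_{n−d−1} : u ∉ Gin(I_Γ)}. -/

import Mathlib

/-! Combinatorics of simplicial complexes on subsets of ℕ (vertex set `[n] = Finset.Icc 1 n`). -/

/-- `Γ` is a simplicial complex on the vertex set `V`. -/
def SimplicialComplexOn (V : Finset ℕ) (Γ : Set (Finset ℕ)) : Prop :=
  (∀ F ∈ Γ, F ⊆ V) ∧ (∀ v ∈ V, ({v} : Finset ℕ) ∈ Γ) ∧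
    (∀ F ∈ Γ, ∀ G, G ⊆ F → G ∈ Γ)

/-- The dimension of a simplicial complex, as an integer (`dim Γ = max {|F| - 1 : F ∈ Γ}`). -/
noncomputable def sdim (Γ : Set (Finset ℕ)) : ℤ :=
  sSup ((fun F : Finset ℕ => (F.card : ℤ) - 1) '' Γ)

/-- A facet of `Γ` is a maximal face. -/
def IsFacet (Γ : Set (Finset ℕ)) (F : Finset ℕ) : Prop :=
  F ∈ Γ ∧ ∀ G ∈ Γ, F ⊆ G → F = G

/-- A complex is pure if all of its facets have the same cardinality. -/
def PureComplex (Γ : Set (Finset ℕ)) : Prop :=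
  ∀ F G, IsFacet Γ F → IsFacet Γ G → F.card = G.card

/-- `fvec Γ k` is the number of faces of `Γ` of cardinality `k`, i.e. `f_{k-1}(Γ)`. -/
noncomputable def fvec (Γ : Set (Finset ℕ)) (k : ℕ) : ℕ :=
  {F ∈ Γ | F.card = k}.ncard

/-- The `h`-vector of a `(d-1)`-dimensional complex:
`h_i = ∑_{j=0}^i (-1)^{i-j} binom(d-j, d-i) f_{j-1}`. -/
noncomputable def hvec (d : ℕ) (Γ : Set (Finset ℕ)) (i : ℕ) : ℤ :=
  ∑ j ∈ Finset.range (i + 1),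
    (-1 : ℤ) ^ (i - j) * (Nat.choose (d - j) (d - i) : ℤ) * (fvec Γ j : ℤ)

/-- The link of `Γ` with respect to a face `F`. -/
def linkOf (Γ : Set (Finset ℕ)) (F : Finset ℕ) : Set (Finset ℕ) :=
  {G | Disjoint G F ∧ G ∪ F ∈ Γ}

/-- The contraction of `Γ` with respect to `{i,j}`, identifying vertex `i` with `j`. -/
def contraction (Γ : Set (Finset ℕ)) (i j : ℕ) : Set (Finset ℕ) :=
  {F | F ∈ Γ ∧ i ∉ F} ∪ {G | ∃ F ∈ Γ, i ∈ F ∧ G = F.erase i ∪ {j}}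

/-- The Link condition: `lk_Γ({i}) ∩ lk_Γ({j}) = lk_Γ({i,j})`. -/
def LinkCondition (Γ : Set (Finset ℕ)) (i j : ℕ) : Prop :=
  linkOf Γ {i} ∩ linkOf Γ {j} = linkOf Γ {i, j}

open Classical in
/-- The shift operator `C_{ij}` on faces. -/
noncomputable def shiftMap (Γ : Set (Finset ℕ)) (i j : ℕ) (F : Finset ℕ) : Finset ℕ :=
  if i ∈ F ∧ j ∉ F ∧ F.erase i ∪ {j} ∉ Γ then F.erase i ∪ {j} else F

/-- `Shift_{ij}(Γ) = {C_{ij}(F) : F ∈ Γ}`. -/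
noncomputable def shiftComplex (Γ : Set (Finset ℕ)) (i j : ℕ) : Set (Finset ℕ) :=
  (shiftMap Γ i j) '' Γ

/-- The join `W * Σ = {F ∪ G : F ⊆ W, G ∈ Σ}` of a vertex set with a complex. -/
def joinW (W : Finset ℕ) (C : Set (Finset ℕ)) : Set (Finset ℕ) :=
  {H | ∃ F ⊆ W, ∃ G ∈ C, H = F ∪ G}

/-- Strong edge decomposability: boundaries of simplices and `{∅}` are strongly edge
decomposable, and recursively, a pure complex satisfying the Link condition w.r.t. an edge
`{i,j}` whose contraction and link are strongly edge decomposable is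
strongly edge decomposable. -/
inductive StronglyEdgeDecomposable : Set (Finset ℕ) → Prop
  | trivialComplex : StronglyEdgeDecomposable {(∅ : Finset ℕ)}
  | simplexBoundary (V : Finset ℕ) (hV : V.Nonempty) :
      StronglyEdgeDecomposable {F | F ⊆ V ∧ F ≠ V}
  | contract (Γ : Set (Finset ℕ)) (i j : ℕ) (hij : i < j)
      (hpure : PureComplex Γ) (hedge : ({i, j} : Finset ℕ) ∈ Γ)
      (hlc : LinkCondition Γ i j)
      (hcon : StronglyEdgeDecomposable (contraction Γ i j))
      (hlk : StronglyEdgeDecomposable (linkOf Γ {i, j})) :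
      StronglyEdgeDecomposable Γ

/-- A shifted complex: `F ∈ Γ`, `i ∈ F`, `i < j`, `j ∈ V` imply `(F \ {i}) ∪ {j} ∈ Γ`. -/
def ShiftedComplex (V : Finset ℕ) (Γ : Set (Finset ℕ)) : Prop :=
  ∀ F ∈ Γ, ∀ i ∈ F, ∀ j, i < j → j ∈ V → insert j (F.erase i) ∈ Γ

/-- A `d`-subset `F ⊆ [n]` is admissible if `n - k ∉ F` implies `[n-d+k, n-k-1] ⊆ F`. -/
def Admissible (n d : ℕ) (F : Finset ℕ) : Prop :=
  F ⊆ Finset.Icc 1 n ∧ F.card = d ∧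
    ∀ k < n, (n - k) ∉ F → Finset.Icc (n - d + k) (n - k - 1) ⊆ F

/-- `Δ(n,d)`, the complex generated by all admissible `d`-subsets of `[n]`; by a theorem of
Kalai this is the symmetric algebraic shifted complex `Δˢ(C(n,d))` of the boundary complex of
the cyclic `d`-polytope with `n` vertices. -/
def DeltaC (n d : ℕ) : Set (Finset ℕ) :=
  if d = 0 then {(∅ : Finset ℕ)} else {G | ∃ F, Admissible n d F ∧ G ⊆ F}

/-- The increasing enumeration of `V`, as a map `{1, …, |V|} → V ⊆ ℕ` (identity elsewhere). -/
noncomputable def vlabel (V : Finset ℕ) (i : ℕ) : ℕ :=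
  if h : i - 1 < V.card then (((V.orderIsoOfFin rfl) ⟨i - 1, h⟩ : V) : ℕ) else i

/-- `Δ(V,d)`: the complex `Δ(|V|,d)` relabeled order-isomorphically onto the vertex set `V`. -/
noncomputable def DeltaV (V : Finset ℕ) (d : ℕ) : Set (Finset ℕ) :=
  (fun G : Finset ℕ => G.image (vlabel V)) '' DeltaC V.card d
/-! Squeezed balls and spheres (Kalai). Monomials on `[m]` are represented as multisets. -/

/-- `U` is a shifted order ideal of monomials on `[m]`: it contains `1` and all variables
`x_1,…,x_m`, is closed under divisibility, and `u·x_i ∈ U`, `i < j ≤ m` imply `u·x_j ∈ U`.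
(A monomial is encoded as the multiset of its variable indices.) -/
def IsShiftedOrderIdeal (m : ℕ) (U : Set (Multiset ℕ)) : Prop :=
  (∀ u ∈ U, ∀ i ∈ u, i ∈ Finset.Icc 1 m) ∧ (0 : Multiset ℕ) ∈ U ∧
    (∀ i ∈ Finset.Icc 1 m, ({i} : Multiset ℕ) ∈ U) ∧
    (∀ u ∈ U, ∀ v, v ≤ u → v ∈ U) ∧
    (∀ u : Multiset ℕ, ∀ i j : ℕ, i < j → j ≤ m → (i ::ₘ u) ∈ U → (j ::ₘ u) ∈ U)

/-- For a monomial `u = x_{i_1}⋯x_{i_k}` (`i_1 ≤ … ≤ i_k`), the `(d+1)`-set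
`F_d(u) = {i_1, i_1+1} ∪ {i_2+2, i_2+3} ∪ ⋯ ∪ {i_k+2(k-1), i_k+2k-1} ∪ [n+2k-d, n]`. -/
noncomputable def Fd (n d : ℕ) (u : Multiset ℕ) : Finset ℕ :=
  (Finset.range (Multiset.card u)).biUnion
      (fun j => {(u.sort (· ≤ ·)).getD j 0 + 2 * j, (u.sort (· ≤ ·)).getD j 0 + 2 * j + 1}) ∪
    Finset.Icc (n + 2 * Multiset.card u - d) n

/-- The squeezed `d`-ball `B_d(U)`: the complex generated by `{F_d(u) : u ∈ U}`. -/
def squeezedBall (n d : ℕ) (U : Set (Multiset ℕ)) : Set (Finset ℕ) :=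
  {G | ∃ u ∈ U, G ⊆ Fd n d u}

/-- The boundary of a pure `d`-dimensional complex `B`: the subcomplex generated by the
`(d-1)`-dimensional faces (cardinality-`d` faces) contained in exactly one facet. -/
noncomputable def complexBoundary (d : ℕ) (B : Set (Finset ℕ)) : Set (Finset ℕ) :=
  {F | ∃ G, F ⊆ G ∧ G ∈ B ∧ G.card = d ∧
    {H | H ∈ B ∧ H.card = d + 1 ∧ G ⊆ H}.ncard = 1}

/-- The squeezed `(d-1)`-sphere `S_d(U) = ∂ B_d(U)`. -/
noncomputable def squeezedSphere (n d : ℕ) (U : Set (Multiset ℕ)) : Set (Finset ℕ) :=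
  complexBoundary d (squeezedBall n d U)

/-! The Stanley–Reisner ideal, the degree reverse lexicographic order, initial ideals and
generic initial ideals in the polynomial ring `K[x_1,…,x_n]`, realized as
`MvPolynomial (Fin n) K` with the variable `x_i` being `X ⟨i-1⟩`. -/

/-- The squarefree monomial `x_F = ∏_{i ∈ F} x_i` (variable `x_i`, `1 ≤ i ≤ n`, is `X ⟨i-1⟩`). -/
noncomputable def faceMonomial (K : Type*) [CommRing K] (n : ℕ) (F : Finset ℕ) :
    MvPolynomial (Fin n) K :=
  ∏ a ∈ Finset.univ.filter (fun a : Fin n => (a : ℕ) + 1 ∈ F), MvPolynomial.X a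

/-- The Stanley–Reisner ideal of a complex `Γ` on `[n]`, generated by the squarefree
monomials `x_F` with `F ⊆ [n]`, `F ∉ Γ`. -/
noncomputable def srIdeal (K : Type*) [CommRing K] (n : ℕ) (Γ : Set (Finset ℕ)) :
    Ideal (MvPolynomial (Fin n) K) :=
  Ideal.span {f | ∃ F : Finset ℕ, F ⊆ Finset.Icc 1 n ∧ F ∉ Γ ∧ f = faceMonomial K n F}

/-- The degree reverse lexicographic order (induced by `x_1 > x_2 > ⋯`, smaller index =
bigger variable): `u < v` iff `deg u < deg v`, or degrees agree and at the largest index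
where `u, v` differ, `u` has the larger exponent. -/
def DegRevLexLT {σ : Type*} [LinearOrder σ] (u v : σ →₀ ℕ) : Prop :=
  (u.sum fun _ e => e) < (v.sum fun _ e => e) ∨
    ((u.sum fun _ e => e) = (v.sum fun _ e => e) ∧
      ∃ k, v k < u k ∧ ∀ l, k < l → u l = v l)

/-- The initial ideal of `I` w.r.t. the degree reverse lexicographic order: the ideal
spanned by the leading monomials of the elements of `I`. -/
noncomputable def initialIdeal {σ : Type*} [LinearOrder σ] {K : Type*} [Field K]
    (I : Ideal (MvPolynomial σ K)) : Ideal (MvPolynomial σ K) :=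
  Ideal.span {m | ∃ f ∈ I, ∃ u ∈ f.support, m = MvPolynomial.monomial u (1 : K) ∧
    ∀ v ∈ f.support, v ≠ u → DegRevLexLT v u}

/-- The linear change of coordinates of `K[x_1,…,x_n]` associated with a matrix `M`,
`x_j ↦ ∑_i M_{ij} x_i`. -/
noncomputable def genLin {K : Type*} [CommRing K] {n : ℕ} (M : Matrix (Fin n) (Fin n) K) :
    MvPolynomial (Fin n) K →ₐ[K] MvPolynomial (Fin n) K :=
  MvPolynomial.aeval (fun j => ∑ a : Fin n, MvPolynomial.C (M a j) * MvPolynomial.X a)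

/-- `J` is the generic initial ideal (w.r.t. degrevlex) of `I`: there is a nonempty Zariski
open subset `U ⊆ GL_n(K)` (the nonvanishing locus of a nonzero polynomial in the matrix
entries) such that `in(φ(I)) = J` for every `φ ∈ U`. -/
def IsGin {K : Type*} [Field K] {n : ℕ} (I J : Ideal (MvPolynomial (Fin n) K)) : Prop :=
  ∃ p : MvPolynomial (Fin n × Fin n) K, p ≠ 0 ∧
    ∀ M : Matrix (Fin n) (Fin n) K, IsUnit M.det →
      MvPolynomial.eval (fun q => M q.1 q.2) p ≠ 0 →
      initialIdeal (Ideal.map (genLin M) I) = J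

/-- The set `G(J)` of (exponent vectors of) minimal monomial generators of a monomial
ideal `J`. -/
def minimalMonomialGens {σ : Type*} {K : Type*} [Field K] (J : Ideal (MvPolynomial σ K)) :
    Set (σ →₀ ℕ) :=
  {u | MvPolynomial.monomial u (1 : K) ∈ J ∧
    ∀ v : σ →₀ ℕ, v ≤ u → MvPolynomial.monomial v (1 : K) ∈ J → v = u}

/-- The squarefree operation `Φ` on exponent vectors:
`x_{i_1} x_{i_2} ⋯ x_{i_k} ↦ {i_1, i_2+1, …, i_k+k-1}` (`i_1 ≤ i_2 ≤ ⋯ ≤ i_k`). -/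
noncomputable def sqfreeOp {n : ℕ} (u : Fin n →₀ ℕ) : Finset ℕ :=
  (List.zipWith (· + ·)
      ((u.toMultiset.map (fun a : Fin n => (a : ℕ) + 1)).sort (· ≤ ·))
      (List.range (Multiset.card (u.toMultiset)))).toFinset

/-- `Δs` is the symmetric algebraic shifted complex of `Γ`: its Stanley–Reisner ideal is
`Φ(Gin(I_Γ))`, i.e. `Δs` consists of the `F ⊆ [n]` containing no `Φ(u)`, `u ∈ G(Gin(I_Γ))`. -/
def IsSymmetricShift (K : Type*) [Field K] (n : ℕ) (Γ Δs : Set (Finset ℕ)) : Prop :=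
  ∃ J : Ideal (MvPolynomial (Fin n) K), IsGin (srIdeal K n Γ) J ∧
    Δs = {F | F ⊆ Finset.Icc 1 n ∧ ∀ u ∈ minimalMonomialGens J, ¬ sqfreeOp u ⊆ F}

/-- The exponent vector (in `K[x_1,…,x_n]`) of a monomial given as a multiset. -/
noncomputable def multisetToExp (n : ℕ) (u : Multiset ℕ) : Fin n →₀ ℕ :=
  Finsupp.equivFunOnFinite.symm (fun a : Fin n => u.count ((a : ℕ) + 1))
/-! The exterior algebra `E = ⋀⟨e_1, e_2, …⟩` over `K`, exterior face ideals, the reverse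
lexicographic order, initial ideals and exterior algebraic shifting. We realize `E` as the
exterior algebra of the `K`-module `ℕ → K`, with `e_i` the image of `Pi.single i 1`. -/

/-- The exterior algebra `⋀ (ℕ → K)` hosting all the exterior face ideals. -/
abbrev ExtAlg (K : Type*) [Field K] := ExteriorAlgebra K (ℕ → K)

/-- The exterior monomial `e_F = e_{i_1} ∧ ⋯ ∧ e_{i_k}` for `F = {i_1 < ⋯ < i_k}`. -/
noncomputable def eMon (K : Type*) [Field K] (F : Finset ℕ) : ExtAlg K :=
  ((F.sort (· ≤ ·)).map (fun i => ExteriorAlgebra.ι K (Pi.single i (1 : K)))).prod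

/-- The exterior face ideal `J_Γ` of a complex `Γ` on the vertex set `V`, generated by the
monomials `e_F` with `F ⊆ V`, `F ∉ Γ`. -/
noncomputable def extFaceIdeal (K : Type*) [Field K] (V : Finset ℕ) (Γ : Set (Finset ℕ)) :
    Ideal (ExtAlg K) :=
  Ideal.span {x | ∃ F : Finset ℕ, F ⊆ V ∧ F ∉ Γ ∧ x = eMon K F}

/-- The alternating form computing the determinant of the coordinates indexed by `F`. -/
noncomputable def detCoeffAlt (K : Type*) [Field K] (F : Finset ℕ) :
    (ℕ → K) [⋀^Fin F.card]→ₗ[K] K :=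
  (Matrix.detRowAlternating).compLinearMap
    (LinearMap.funLeft K K (fun b : Fin F.card => ((F.orderIsoOfFin rfl b : F) : ℕ)))

/-- The coefficient functional of the basis monomial `e_F`: the linear functional on the
exterior algebra giving the coefficient of `e_F` in the monomial basis expansion. -/
noncomputable def extCoeff (K : Type*) [Field K] (F : Finset ℕ) : ExtAlg K →ₗ[K] K :=
  ExteriorAlgebra.liftAlternating
    (fun i => if h : i = F.card then (detCoeffAlt K F).domDomCongr (finCongr h.symm) else 0)

/-- The reverse lexicographic order (induced by `1 > 2 > ⋯`) on exterior monomials: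
`F < G` iff `|F| < |G|`, or the cardinalities agree and the largest element of the
symmetric difference `F Δ G` belongs to `F`. -/
def RevLexLT (F G : Finset ℕ) : Prop :=
  F.card < G.card ∨ (F.card = G.card ∧
    ∃ k, k ∈ F ∧ k ∉ G ∧ ∀ l, k < l → (l ∈ F ↔ l ∈ G))

/-- The initial ideal of an ideal `I` of the exterior algebra w.r.t. the reverse
lexicographic order: spanned by the leading monomials `e_F` of the elements of `I`. -/
noncomputable def extInitialIdeal (K : Type*) [Field K] (I : Ideal (ExtAlg K)) :
    Ideal (ExtAlg K) :=
  Ideal.span {x | ∃ y ∈ I, ∃ F : Finset ℕ, x = eMon K F ∧ extCoeff K F y ≠ 0 ∧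
    ∀ G : Finset ℕ, extCoeff K G y ≠ 0 → G ≠ F → RevLexLT G F}

/-- The linear change of coordinates of `span{e_i : i ∈ V}` (identity elsewhere)
associated with a `|V| × |V|` matrix `M`. -/
noncomputable def extLinMap (K : Type*) [Field K] (V : Finset ℕ)
    (M : Matrix (Fin V.card) (Fin V.card) K) : (ℕ → K) →ₗ[K] (ℕ → K) where
  toFun v k :=
    if h : k ∈ V then
      ∑ a : Fin V.card,
        M ((V.orderIsoOfFin rfl).symm ⟨k, h⟩) a * v ((V.orderIsoOfFin rfl a : V) : ℕ)
    else v k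
  map_add' x y := by
    funext k
    by_cases h : k ∈ V <;> simp [h, mul_add, Finset.sum_add_distrib]
  map_smul' c x := by
    funext k
    by_cases h : k ∈ V <;> simp [h, Finset.mul_sum, mul_left_comm]

/-- The algebra automorphism of the exterior algebra induced by `extLinMap`. -/
noncomputable def extAlgMap (K : Type*) [Field K] (V : Finset ℕ)
    (M : Matrix (Fin V.card) (Fin V.card) K) : ExtAlg K →ₐ[K] ExtAlg K :=
  ExteriorAlgebra.lift K ⟨(ExteriorAlgebra.ι K).comp (extLinMap K V M),
    fun _ => ExteriorAlgebra.ι_sq_zero _⟩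

/-- `Δe` is the exterior algebraic shifted complex of `Γ` (as complexes on the vertex set
`V`): `J_{Δe} = Gin(J_Γ)`, where the generic initial ideal is witnessed by a nonempty
Zariski open subset of `GL(V)` (the nonvanishing locus of a nonzero polynomial in the
matrix entries). -/
def IsExteriorShift (K : Type*) [Field K] (V : Finset ℕ) (Γ Δe : Set (Finset ℕ)) : Prop :=
  ∃ p : MvPolynomial (Fin V.card × Fin V.card) K, p ≠ 0 ∧
    ∀ M : Matrix (Fin V.card) (Fin V.card) K, IsUnit M.det →
      MvPolynomial.eval (fun q => M q.1 q.2) p ≠ 0 →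
      extInitialIdeal K (Ideal.map (extAlgMap K V M) (extFaceIdeal K V Γ)) =
        extFaceIdeal K V Δe

/-- The simplicial complex on `V` whose exterior face ideal is the (monomial) ideal `J`. -/
noncomputable def complexOfExtIdeal (K : Type*) [Field K] (V : Finset ℕ)
    (J : Ideal (ExtAlg K)) : Set (Finset ℕ) :=
  {F | F ⊆ V ∧ eMon K F ∉ J}

/-- Nongeneric exterior shifting `Δ_φ(Γ)`, defined by `J_{Δ_φ(Γ)} = in(φ(J_Γ))` for an
individual linear change of coordinates `φ` given by the matrix `M`. -/
noncomputable def DeltaPhi (K : Type*) [Field K] (V : Finset ℕ)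
    (M : Matrix (Fin V.card) (Fin V.card) K) (Γ : Set (Finset ℕ)) : Set (Finset ℕ) :=
  complexOfExtIdeal K V (extInitialIdeal K (Ideal.map (extAlgMap K V M) (extFaceIdeal K V Γ)))

/-- The shifting-theoretic upper bound relation for a `(d-1)`-dimensional complex `Γ` on the
vertex set `V`: `Δᵉ(Γ) ⊆ Δ(V,d)`. -/
def ShiftingUBR (K : Type*) [Field K] (V : Finset ℕ) (d : ℕ) (Γ : Set (Finset ℕ)) : Prop :=
  ∀ Δe, IsExteriorShift K V Γ Δe → Δe ⊆ DeltaV V d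
/-! Graded pieces, linear systems of parameters, the Cohen–Macaulay property and the strong
Lefschetz property for graded quotients `A = K[x_1,…,x_n]/I`. -/

/-- The degree-`k` homogeneous component of the graded quotient `S/I` (the image of the
degree-`k` homogeneous polynomials). -/
noncomputable def quotPiece {K : Type*} [Field K] {n : ℕ}
    (I : Ideal (MvPolynomial (Fin n) K)) (k : ℕ) :
    Submodule K (MvPolynomial (Fin n) K ⧸ I) :=
  (MvPolynomial.homogeneousSubmodule (Fin n) K k).map (Ideal.Quotient.mkₐ K I).toLinearMap

/-- `θ_1, …, θ_d` is a linear system of parameters of `S/I`: the `θ_a` are linear forms and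
the quotient `S/(I + (θ_1,…,θ_d))` has Krull dimension `≤ 0`. -/
def IsLSOP {K : Type*} [Field K] {n : ℕ} (I : Ideal (MvPolynomial (Fin n) K)) (d : ℕ)
    (θ : Fin d → MvPolynomial (Fin n) K) : Prop :=
  (∀ a, (θ a).IsHomogeneous 1) ∧
    ringKrullDim (MvPolynomial (Fin n) K ⧸ (I ⊔ Ideal.span (Set.range θ))) ≤ 0

set_option synthInstance.maxHeartbeats 1000000 in
/-- The graded quotient `A = S/I` is Cohen–Macaulay: a linear system of parameters of
length `d = dim A` forms a regular `A`-sequence. -/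
def IsCMIdeal {K : Type*} [Field K] {n : ℕ} (I : Ideal (MvPolynomial (Fin n) K)) : Prop :=
  ∃ d : ℕ, ringKrullDim (MvPolynomial (Fin n) K ⧸ I) = d ∧
    ∃ θ : Fin d → MvPolynomial (Fin n) K, IsLSOP I d θ ∧
      RingTheory.Sequence.IsRegular (MvPolynomial (Fin n) K ⧸ I)
        ((List.ofFn θ).map (⇑(Ideal.Quotient.mk I)))

/-- The graded quotient `A = S/I` has the strong Lefschetz property: `A` is Cohen–Macaulay
and there are an l.s.o.p. `θ_1, …, θ_d` (`d = dim A`) and a linear form `ω` such that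
`ω^{s-2i} : (A/θA)_i → (A/θA)_{s-i}` is bijective for `0 ≤ i ≤ s/2`, where
`s = max{k : (A/θA)_k ≠ 0}`. -/
def HasSLPIdeal {K : Type*} [Field K] {n : ℕ} (I : Ideal (MvPolynomial (Fin n) K)) : Prop :=
  IsCMIdeal I ∧
    ∃ d : ℕ, ringKrullDim (MvPolynomial (Fin n) K ⧸ I) = d ∧
      ∃ θ : Fin d → MvPolynomial (Fin n) K, IsLSOP I d θ ∧
        ∃ ω : MvPolynomial (Fin n) K, ω.IsHomogeneous 1 ∧
          ∃ s : ℕ,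
            (quotPiece (I ⊔ Ideal.span (Set.range θ)) s ≠ ⊥ ∧
              ∀ k, s < k → quotPiece (I ⊔ Ideal.span (Set.range θ)) k = ⊥) ∧
            ∀ i : ℕ, 2 * i ≤ s →
              Set.BijOn
                (fun x => (Ideal.Quotient.mk (I ⊔ Ideal.span (Set.range θ)) ω) ^ (s - 2 * i) * x)
                (quotPiece (I ⊔ Ideal.span (Set.range θ)) i)
                (quotPiece (I ⊔ Ideal.span (Set.range θ)) (s - i))

/-- A simplicial complex is Cohen–Macaulay over `K` if its Stanley–Reisner ring is. -/
def ComplexCM (K : Type*) [Field K] (n : ℕ) (Γ : Set (Finset ℕ)) : Prop :=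
  IsCMIdeal (srIdeal K n Γ)

/-- A `(d-1)`-dimensional complex `Γ` has the strong Lefschetz property if `h_d(Γ) > 0` and
its Stanley–Reisner ring has the strong Lefschetz property. -/
def ComplexSLP (K : Type*) [Field K] (n d : ℕ) (Γ : Set (Finset ℕ)) : Prop :=
  0 < hvec d Γ d ∧ HasSLPIdeal (srIdeal K n Γ)

/-- A `1`-dimensional simplicial sphere (a cycle): a complex all of whose faces are edges or
smaller, every vertex lying in exactly two edges, whose edge graph is connected. -/
def IsCycleComplex (V : Finset ℕ) (Γ : Set (Finset ℕ)) : Prop :=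
  SimplicialComplexOn V Γ ∧ (∀ F ∈ Γ, F.card ≤ 2) ∧
    (∀ v ∈ V, {e | e ∈ Γ ∧ e.card = 2 ∧ v ∈ e}.ncard = 2) ∧
    ∀ u ∈ V, ∀ v ∈ V,
      Relation.ReflTransGen (fun a b : ℕ => ({a, b} : Finset ℕ) ∈ Γ) u v

namespace SqueezedGin

theorem max_induction {p : Multiset ℕ → Prop} (h0 : p 0)
    (hs : ∀ b w, (∀ x ∈ w, x ≤ b) → p w → p (b ::ₘ w)) (w : Multiset ℕ) : p w := by
  obtain ⟨r, hr⟩ : ∃ r, w.card = r := ⟨_, rfl⟩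
  induction r generalizing w with
  | zero => rw [Multiset.card_eq_zero.1 hr]; exact h0
  | succ r ih =>
    have hw : w.toFinset.Nonempty := by
      rw [Multiset.toFinset_nonempty]; rintro rfl; simp at hr
    obtain ⟨b, hb, hmax⟩ := w.toFinset.exists_max_image id hw
    rw [Multiset.mem_toFinset] at hb
    rw [← Multiset.cons_erase hb]
    refine hs b _ (fun x hx => ?_) (ih _ ?_)
    · exact hmax x (Multiset.mem_toFinset.2 (Multiset.mem_of_mem_erase hx))
    · rw [Multiset.card_erase_of_mem hb, hr]; rfl

/-- The increasing enumeration `t ↦ i_{t+1}` of a monomial `x_{i_1}⋯x_{i_k}`, continued by `D`. -/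
noncomputable def qf (D : ℕ) (u : Multiset ℕ) (t : ℕ) : ℕ := (u.sort (· ≤ ·)).getD t D

/-- The number of variables of index at most `c` in a monomial, with multiplicity. -/
def cnt (c : ℕ) (u : Multiset ℕ) : ℕ := u.countP (· ≤ c)

theorem getD_le_iff (D c : ℕ) (hc : c < D) (l : List ℕ) (hl : l.Pairwise (· ≤ ·)) (t : ℕ) :
    l.getD t D ≤ c ↔ t < l.countP (· ≤ c) := by
  induction l generalizing t with
  | nil => simpa using hc
  | cons a l ih =>
    rw [List.pairwise_cons] at hl
    by_cases ha : a ≤ c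
    · cases t with
      | zero => simp [ha]
      | succ t => simpa [ha] using ih hl.2 t
    · have h0 : l.countP (· ≤ c) = 0 := by
        rw [List.countP_eq_zero]
        intro x hx
        have := hl.1 x hx
        simp; omega
      cases t with
      | zero => simp [ha, h0]
      | succ t =>
        have := ih hl.2 t
        rw [h0] at this
        simp only [List.getD_cons_succ, this]
        simp [ha, h0]

theorem qf_le_iff {D c : ℕ} (hc : c < D) (u : Multiset ℕ) (t : ℕ) :
    qf D u t ≤ c ↔ t < cnt c u := by
  unfold qf cnt
  rw [getD_le_iff D c hc _ (Multiset.pairwise_sort u (· ≤ ·))]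
  conv_rhs => rw [← Multiset.sort_eq u (· ≤ ·)]
  rw [Multiset.coe_countP]

theorem cnt_cons (c a : ℕ) (u : Multiset ℕ) :
    cnt c (a ::ₘ u) = cnt c u + if a ≤ c then 1 else 0 := by
  unfold cnt; rw [Multiset.countP_cons]

theorem cnt_le_card (c : ℕ) (u : Multiset ℕ) : cnt c u ≤ u.card := Multiset.countP_le_card _ _

theorem cnt_eq_card {c : ℕ} {u : Multiset ℕ} (h : ∀ x ∈ u, x ≤ c) : cnt c u = u.card :=
  Multiset.countP_eq_card.2 h

theorem cnt_mono {c : ℕ} {u v : Multiset ℕ} (h : u ≤ v) : cnt c u ≤ cnt c v :=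
  Multiset.countP_le_of_le _ h

theorem qf_of_ge {D : ℕ} {u : Multiset ℕ} {t : ℕ} (h : u.card ≤ t) : qf D u t = D := by
  unfold qf; rw [List.getD_eq_default]; simpa using h

theorem qf_congr {D D' : ℕ} {u : Multiset ℕ} {t : ℕ} (h : t < u.card) : qf D u t = qf D' u t := by
  unfold qf
  rw [List.getD_eq_getElem _ _ (by simpa using h), List.getD_eq_getElem _ _ (by simpa using h)]

theorem qf_mem {D : ℕ} {u : Multiset ℕ} {t : ℕ} (h : t < u.card) : qf D u t ∈ u := by
  unfold qf
  rw [List.getD_eq_getElem _ _ (by simpa using h), ← Multiset.mem_sort (· ≤ ·)]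
  exact List.getElem_mem _

theorem qf_le {m : ℕ} {u : Multiset ℕ} (hu : ∀ x ∈ u, x ≤ m) (t : ℕ) : qf (m + 1) u t ≤ m + 1 := by
  rcases lt_or_ge t u.card with h | h
  · exact (hu _ (qf_mem h)).trans (Nat.le_succ _)
  · rw [qf_of_ge h]

theorem qf_mono {m : ℕ} {u : Multiset ℕ} (hu : ∀ x ∈ u, x ≤ m) : Monotone (qf (m + 1) u) := by
  intro s t hst
  rcases lt_or_ge (qf (m + 1) u t) (m + 1) with h | h
  · exact (qf_le_iff h u s).2 (hst.trans_lt ((qf_le_iff h u t).1 le_rfl))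
  · exact (qf_le hu s).trans h

theorem map_qf (D : ℕ) (u : Multiset ℕ) : (Multiset.range u.card).map (qf D u) = u := by
  conv_rhs => rw [← Multiset.sort_eq u (· ≤ ·)]
  rw [← Multiset.coe_range, Multiset.map_coe]
  congr 1
  apply List.ext_getElem
  · simp
  · intro i h1 h2
    simp only [List.getElem_map, List.getElem_range]
    unfold qf
    rw [List.getD_eq_getElem _ _ h2]

theorem sort_cons_max (j : ℕ) (u : Multiset ℕ) (hj : ∀ x ∈ u, x ≤ j) :
    (j ::ₘ u).sort (· ≤ ·) = u.sort (· ≤ ·) ++ [j] := by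
  apply List.Perm.eq_of_pairwise (le := (· ≤ ·))
  · intro a b _ _ h1 h2; exact le_antisymm h1 h2
  · exact Multiset.pairwise_sort _ _
  · rw [List.pairwise_append]
    refine ⟨Multiset.pairwise_sort _ _, by simp, ?_⟩
    intro a ha b hb
    rw [Multiset.mem_sort] at ha
    rw [List.mem_singleton.1 hb]
    exact hj a ha
  · rw [← Multiset.coe_eq_coe, Multiset.sort_eq, ← Multiset.coe_add, Multiset.sort_eq,
      Multiset.coe_singleton, add_comm, Multiset.singleton_add]

theorem qf_cons_lt {D j : ℕ} {u : Multiset ℕ} (hj : ∀ x ∈ u, x ≤ j) {t : ℕ} (ht : t < u.card) :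
    qf D (j ::ₘ u) t = qf D u t := by
  unfold qf
  rw [sort_cons_max j u hj, List.getD_append]
  simpa using ht

theorem qf_cons_card {D j : ℕ} {u : Multiset ℕ} (hj : ∀ x ∈ u, x ≤ j) :
    qf D (j ::ₘ u) u.card = j := by
  unfold qf
  rw [sort_cons_max j u hj, List.getD_append_right _ _ _ _ (by simp)]
  simp

theorem qf_map_range {D : ℕ} {q : ℕ → ℕ} (hq : Monotone q) {r t : ℕ} (ht : t < r) :
    qf D ((Multiset.range r).map q) t = q t := by
  induction r with
  | zero => omega
  | succ r ih =>
    have hmax : ∀ x ∈ (Multiset.range r).map q, x ≤ q r := by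
      intro x hx
      obtain ⟨s, hs, rfl⟩ := Multiset.mem_map.1 hx
      exact hq (Multiset.mem_range.1 hs).le
    rw [Multiset.range_succ, Multiset.map_cons]
    rcases Nat.lt_succ_iff_lt_or_eq.1 ht with h | h
    · rw [qf_cons_lt hmax (by simpa using h), ih h]
    · have := qf_cons_card (D := D) hmax
      rw [Multiset.card_map, Multiset.card_range] at this
      rw [h, this]

/-- A set of monomials closed under division and under raising variables up to index `m`. -/
structure ShiftClosed (m : ℕ) (U : Set (Multiset ℕ)) : Prop where
  le_of_mem : ∀ u ∈ U, ∀ x ∈ u, x ≤ m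
  down : ∀ u ∈ U, ∀ v, v ≤ u → v ∈ U
  shift : ∀ u : Multiset ℕ, ∀ i j : ℕ, i < j → j ≤ m → (i ::ₘ u) ∈ U → (j ::ₘ u) ∈ U

theorem ShiftClosed.up {m : ℕ} {U : Set (Multiset ℕ)} (hU : ShiftClosed m U) (f g : ℕ → ℕ)
    (T s : Multiset ℕ) (hfg : ∀ t ∈ T, f t ≤ g t) (hg : ∀ t ∈ T, g t ≤ m)
    (h : T.map f + s ∈ U) : T.map g + s ∈ U := by
  induction T using Multiset.induction generalizing s with
  | empty => simpa using h
  | cons a T ih =>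
    rw [Multiset.map_cons, Multiset.cons_add] at h ⊢
    have h2 : g a ::ₘ (T.map f + s) ∈ U := by
      rcases (hfg a (Multiset.mem_cons_self _ _)).lt_or_eq with hlt | heq
      · exact hU.shift _ _ _ hlt (hg a (Multiset.mem_cons_self _ _)) h
      · rwa [← heq]
    rw [← Multiset.add_cons] at h2 ⊢
    exact ih _ (fun t ht => hfg t (Multiset.mem_cons_of_mem ht))
      (fun t ht => hg t (Multiset.mem_cons_of_mem ht)) h2

theorem ShiftClosed.mem_of_qf_le {m : ℕ} {U : Set (Multiset ℕ)} (hU : ShiftClosed m U)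
    {u v : Multiset ℕ} (hu : u ∈ U) (hv : ∀ x ∈ v, x ≤ m)
    (h : ∀ t < v.card, qf (m + 1) u t ≤ qf (m + 1) v t) : v ∈ U := by
  have hcard : v.card ≤ u.card := by
    by_contra hlt
    have := h u.card (by omega)
    rw [qf_of_ge le_rfl] at this
    have := hv _ (qf_mem (D := m + 1) (show u.card < v.card by omega))
    omega
  have h1 : (Multiset.range v.card).map (qf (m + 1) u) + 0 ∈ U := by
    rw [add_zero]
    refine hU.down u hu _ ?_
    conv_rhs => rw [← map_qf (m + 1) u]
    exact Multiset.map_le_map (Multiset.range_le.2 hcard)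
  have h2 := hU.up _ (qf (m + 1) v) _ _ (fun t ht => h t (Multiset.mem_range.1 ht))
    (fun t ht => hv _ (qf_mem (Multiset.mem_range.1 ht))) h1
  rwa [add_zero, map_qf] at h2

/-- The set `{q_0, q_0 + 1} ∪ {q_1 + 2, q_1 + 3} ∪ ⋯` with `d + 1` elements. -/
def facet (d : ℕ) (q : ℕ → ℕ) : Finset ℕ := (Finset.range (d + 1)).image fun s => q (s / 2) + s

theorem mem_facet {d : ℕ} {q : ℕ → ℕ} {x : ℕ} : x ∈ facet d q ↔ ∃ s ≤ d, q (s / 2) + s = x := by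
  simp [facet]

theorem facet_strictMono {q : ℕ → ℕ} (hq : Monotone q) : StrictMono fun s => q (s / 2) + s := by
  intro s t hst
  have : q (s / 2) ≤ q (t / 2) := hq (Nat.div_le_div_right hst.le)
  show q (s / 2) + s < q (t / 2) + t
  omega

theorem card_facet {d : ℕ} {q : ℕ → ℕ} (hq : Monotone q) : (facet d q).card = d + 1 := by
  rw [facet, Finset.card_image_of_injective _ (facet_strictMono hq).injective, Finset.card_range]

theorem facet_congr {d : ℕ} {q q' : ℕ → ℕ} (h : ∀ t ≤ d / 2, q t = q' t) :
    facet d q = facet d q' := by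
  apply Finset.image_congr
  intro s hs
  have hs : s < d + 1 := by simpa using hs
  show q (s / 2) + s = q' (s / 2) + s
  rw [h (s / 2) (by omega)]

/-- The complex generated by the sets `facet d (qf (m + 1) u)`, `u ∈ U`. -/
def ballq (m d : ℕ) (U : Set (Multiset ℕ)) : Set (Finset ℕ) :=
  {G | ∃ u ∈ U, G ⊆ facet d (qf (m + 1) u)}

theorem Fd_eq_facet (m d : ℕ) (u : Multiset ℕ) (hu : 2 * u.card ≤ d + 1) :
    Fd (m + d + 1) d u = facet d (qf (m + 1) u) := by
  ext x
  rw [mem_facet, Fd, Finset.mem_union, Finset.mem_biUnion, Finset.mem_Icc]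
  have key : ∀ t < u.card, (u.sort (· ≤ ·)).getD t 0 = qf (m + 1) u t :=
    fun t ht => qf_congr (D := 0) ht
  constructor
  · rintro (⟨t, ht, hx⟩ | ⟨h1, h2⟩)
    · rw [Finset.mem_range] at ht
      rw [Finset.mem_insert, Finset.mem_singleton, key t ht] at hx
      rcases hx with rfl | rfl
      · exact ⟨2 * t, by omega, by rw [Nat.mul_div_cancel_left _ two_pos]⟩
      · refine ⟨2 * t + 1, by omega, ?_⟩
        rw [show (2 * t + 1) / 2 = t by omega, add_assoc]
    · refine ⟨x - (m + 1), by omega, ?_⟩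
      rw [qf_of_ge (by omega)]; omega
  · rintro ⟨s, hs, rfl⟩
    rcases lt_or_ge (s / 2) u.card with h | h
    · refine Or.inl ⟨s / 2, Finset.mem_range.2 h, ?_⟩
      rw [key _ h, Finset.mem_insert, Finset.mem_singleton]
      omega
    · rw [qf_of_ge h]; right; omega

theorem squeezedBall_eq (m d : ℕ) (U : Set (Multiset ℕ)) (hdeg : ∀ u ∈ U, 2 * u.card ≤ d + 1) :
    squeezedBall (m + d + 1) d U = ballq m d U := by
  ext G
  constructor
  · rintro ⟨u, hu, h⟩; exact ⟨u, hu, by rwa [← Fd_eq_facet m d u (hdeg u hu)]⟩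
  · rintro ⟨u, hu, h⟩; exact ⟨u, hu, by rwa [Fd_eq_facet m d u (hdeg u hu)]⟩

theorem ShiftClosed.realize {m d : ℕ} {U : Set (Multiset ℕ)} (hU : ShiftClosed m U)
    {u : Multiset ℕ} (hu : u ∈ U) {q : ℕ → ℕ} (hq : Monotone q) (hqm : ∀ t, q t ≤ m + 1)
    (hle : ∀ t ≤ d / 2, qf (m + 1) u t ≤ q t) :
    ∃ u' ∈ U, ∀ t ≤ d / 2, qf (m + 1) u' t = q t := by
  have hr : ∀ κ : ℕ, ∃ r ≤ κ, ∀ t < κ, q t ≤ m ↔ t < r := by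
    intro κ
    induction κ with
    | zero => exact ⟨0, le_rfl, by simp⟩
    | succ κ ih =>
      by_cases h : q κ ≤ m
      · exact ⟨κ + 1, le_rfl, fun t ht => ⟨fun _ => ht, fun _ => (hq (by omega)).trans h⟩⟩
      · obtain ⟨r, hr, hrt⟩ := ih
        refine ⟨r, by omega, fun t ht => ?_⟩
        rcases Nat.lt_succ_iff_lt_or_eq.1 ht with h' | rfl
        · exact hrt t h'
        · exact ⟨fun h' => absurd h' h, fun h' => by omega⟩
  obtain ⟨r, hrκ, hr⟩ := hr (d / 2 + 1)
  have hval : ∀ t ≤ d / 2, qf (m + 1) ((Multiset.range r).map q) t = q t := by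
    intro t ht
    rcases lt_or_ge t r with h | h
    · exact qf_map_range hq h
    · rw [qf_of_ge (by simpa using h)]
      have := hr t (by omega)
      have := hqm t
      omega
  refine ⟨_, hU.mem_of_qf_le hu ?_ ?_, hval⟩
  · intro x hx
    obtain ⟨t, ht, rfl⟩ := Multiset.mem_map.1 hx
    rw [Multiset.mem_range] at ht
    exact (hr t (by omega)).2 ht
  · intro t ht
    rw [Multiset.card_map, Multiset.card_range] at ht
    rw [hval t (by omega)]
    exact hle t (by omega)

/-- Chains of elements spaced by at least two inside a facet dominate the facet. -/
theorem le_of_chain_subset {d r : ℕ} {a q : ℕ → ℕ} (ha : ∀ s t, s ≤ t → t < r → a s ≤ a t)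
    (hq : Monotone q) (e : ℕ) (h : ∀ t < r, a t + 2 * t + e ∈ facet d q) :
    ∃ s : ℕ → ℕ, (∀ t < r, s t ≤ d ∧ q (s t / 2) + s t = a t + 2 * t + e ∧ t ≤ s t / 2) ∧
      ∀ t, t + 1 < r → s t / 2 < s (t + 1) / 2 := by
  choose! s hs using fun t (ht : t < r) => mem_facet.1 (h t ht)
  have hlt : ∀ t, t + 1 < r → s t / 2 < s (t + 1) / 2 := by
    intro t ht
    by_contra hcon
    have h1 := (hs t (by omega)).2
    have h2 := (hs (t + 1) ht).2
    have h3 := ha t (t + 1) (by omega) ht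
    have h4 := hq (not_lt.1 hcon)
    omega
  have hge : ∀ t < r, t ≤ s t / 2 := by
    intro t
    induction t with
    | zero => intro _; exact Nat.zero_le _
    | succ t ih =>
      intro ht
      have := ih (by omega)
      have := hlt t ht
      omega
  exact ⟨s, fun t ht => ⟨(hs t ht).1, (hs t ht).2, hge t ht⟩, hlt⟩

/-- The multiset `{i_1 + e, i_2 + 2 + e, …, i_k + 2(k-1) + e}` for `u = x_{i_1}⋯x_{i_k}`. -/
noncomputable def sig (e : ℕ) (u : Multiset ℕ) : Multiset ℕ :=
  (Multiset.range u.card).map fun t => qf 0 u t + 2 * t + e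

theorem card_sig (e : ℕ) (u : Multiset ℕ) : (sig e u).card = u.card := by simp [sig]

theorem mem_sig {e D : ℕ} {u : Multiset ℕ} {x : ℕ} :
    x ∈ sig e u ↔ ∃ t < u.card, qf D u t + 2 * t + e = x := by
  rw [sig, Multiset.mem_map]
  constructor
  · rintro ⟨t, ht, h⟩
    rw [Multiset.mem_range] at ht
    exact ⟨t, ht, by rw [qf_congr ht, h]⟩
  · rintro ⟨t, ht, h⟩
    exact ⟨t, Multiset.mem_range.2 ht, by rw [qf_congr ht, h]⟩

theorem sig_cons {e j : ℕ} {u : Multiset ℕ} (hj : ∀ x ∈ u, x ≤ j) :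
    sig e (j ::ₘ u) = (j + 2 * u.card + e) ::ₘ sig e u := by
  unfold sig
  rw [Multiset.card_cons, Multiset.range_succ, Multiset.map_cons, qf_cons_card hj]
  congr 1
  apply Multiset.map_congr rfl
  intro t ht
  rw [qf_cons_lt hj (Multiset.mem_range.1 ht)]

theorem ShiftClosed.mem_of_sig_mem_ballq {m d : ℕ} {U : Set (Multiset ℕ)} (hU : ShiftClosed m U)
    {v : Multiset ℕ} (hv : ∀ x ∈ v, x ≤ m) (h : (sig 0 v).toFinset ∈ ballq m d U) : v ∈ U := by
  obtain ⟨u, hu, hsub⟩ := h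
  have hq := qf_mono (hU.le_of_mem u hu)
  obtain ⟨s, hs, -⟩ := le_of_chain_subset (a := qf (m + 1) v) (r := v.card)
    (fun _ _ h _ => qf_mono hv h) hq 0 (fun t ht => hsub (by
      rw [Multiset.mem_toFinset, mem_sig (D := m + 1)]; exact ⟨t, ht, rfl⟩))
  refine hU.mem_of_qf_le hu hv fun t ht => ?_
  obtain ⟨-, h1, h2⟩ := hs t ht
  have := hq h2
  omega

/-- The element of `facet d (qf (m + 1) u)` in the position of `c ∈ [m + 1, m + d + 1]`. -/
noncomputable def dec (m : ℕ) (u : Multiset ℕ) (c : ℕ) : ℕ :=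
  qf (m + 1) u ((c - (m + 1)) / 2) + (c - (m + 1))

theorem exists_chain_decomposition (m d : ℕ) (w : Multiset ℕ) (hcard : w.card ≤ d / 2 + 1)
    (hw : ∀ x ∈ w, x ∈ Finset.Icc 1 (m + d + 1)) :
    ∃ u s : Multiset ℕ, (∀ x ∈ u, x ∈ Finset.Icc 1 m) ∧
      (∀ c ∈ s, c ∈ Finset.Icc (m + 1) (m + d + 1)) ∧ w = sig 0 u + s.map (dec m u) ∧
      ∀ x ∈ w, x ∈ facet d (qf (m + 1) u) := by
  induction w using max_induction with
  | h0 => exact ⟨0, 0, by simp, by simp, by simp [sig], by simp⟩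
  | hs b w hb ih =>
    rw [Multiset.card_cons] at hcard
    obtain ⟨u, s, hu, hs, hw', hsub⟩ := ih (by omega) fun x hx => hw x (Multiset.mem_cons_of_mem hx)
    have hb1 := Finset.mem_Icc.1 (hw b (Multiset.mem_cons_self _ _))
    have hum : ∀ x ∈ u, x ≤ m := fun x hx => (Finset.mem_Icc.1 (hu x hx)).2
    by_cases hbf : b ∈ facet d (qf (m + 1) u)
    · obtain ⟨y, hy, hyb⟩ := mem_facet.1 hbf
      refine ⟨u, (m + 1 + y) ::ₘ s, hu, ?_, ?_, ?_⟩
      · intro c hc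
        rcases Multiset.mem_cons.1 hc with rfl | hc
        · rw [Finset.mem_Icc]; omega
        · exact hs c hc
      · rw [Multiset.map_cons, dec, Nat.add_sub_cancel_left, hyb, Multiset.add_cons, hw']
      · intro x hx
        rcases Multiset.mem_cons.1 hx with rfl | hx
        · exact hbf
        · exact hsub x hx
    · have hr : u.card ≤ w.card := by
        rw [hw', Multiset.card_add, card_sig]; exact Nat.le_add_right _ _
      have hbr : b < m + 1 + 2 * u.card := by
        by_contra hcon
        refine hbf (mem_facet.2 ⟨b - (m + 1), by omega, ?_⟩)
        rw [qf_of_ge (by omega)]; omega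
      have hbu : ∀ t < u.card, qf (m + 1) u t + 2 * t + 2 ≤ b := by
        intro t ht
        have h1 : qf (m + 1) u t + 2 * t ≤ b := by
          apply hb
          rw [hw', Multiset.mem_add, mem_sig (D := m + 1)]
          exact Or.inl ⟨t, ht, rfl⟩
        have h2 : b ≠ qf (m + 1) u t + 2 * t := by
          rintro rfl
          exact hbf (mem_facet.2 ⟨2 * t, by omega, by rw [Nat.mul_div_cancel_left _ two_pos]⟩)
        have h3 : b ≠ qf (m + 1) u t + 2 * t + 1 := by
          rintro rfl
          exact hbf (mem_facet.2 ⟨2 * t + 1, by omega, by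
            rw [show (2 * t + 1) / 2 = t by omega, add_assoc]⟩)
        omega
      have hbj : 2 * u.card + 1 ≤ b := by
        rcases Nat.eq_zero_or_pos u.card with h | h
        · omega
        · have h1 := hbu (u.card - 1) (by omega)
          have h2 := hu _ (qf_mem (D := m + 1) (show u.card - 1 < u.card by omega))
          rw [Finset.mem_Icc] at h2
          omega
      have hmax : ∀ x ∈ u, x ≤ b - 2 * u.card := by
        intro x hx
        rw [← map_qf (m + 1) u, Multiset.mem_map] at hx
        obtain ⟨t, ht, rfl⟩ := hx
        rw [Multiset.mem_range] at ht
        have h1 := hbu (u.card - 1) (by omega)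
        have h2 := qf_mono hum (show t ≤ u.card - 1 by omega)
        omega
      have hold : ∀ y, qf (m + 1) u (y / 2) + y ≤ b →
          qf (m + 1) ((b - 2 * u.card) ::ₘ u) (y / 2) = qf (m + 1) u (y / 2) := by
        intro y hy
        refine qf_cons_lt hmax ?_
        by_contra hcon
        rw [qf_of_ge (not_lt.1 hcon)] at hy
        omega
      refine ⟨(b - 2 * u.card) ::ₘ u, s, ?_, hs, ?_, ?_⟩
      · intro x hx
        rcases Multiset.mem_cons.1 hx with rfl | hx
        · rw [Finset.mem_Icc]; omega
        · exact hu x hx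
      · rw [sig_cons hmax, Multiset.cons_add]
        congr 1
        · omega
        · rw [hw']
          congr 1
          apply Multiset.map_congr rfl
          intro c hc
          unfold dec
          rw [hold]
          apply hb
          rw [hw', Multiset.mem_add]
          exact Or.inr (Multiset.mem_map.2 ⟨c, hc, rfl⟩)
      · intro x hx
        rcases Multiset.mem_cons.1 hx with rfl | hx
        · refine mem_facet.2 ⟨2 * u.card, by omega, ?_⟩
          rw [Nat.mul_div_cancel_left _ two_pos, qf_cons_card hmax]
          omega
        · obtain ⟨y, hy, rfl⟩ := mem_facet.1 (hsub x hx)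
          exact mem_facet.2 ⟨y, hy, by rw [hold y (hb _ hx)]⟩

/-- The monomials of degree `k` in the variables with indices in `[N]`. -/
def Mon (N k : ℕ) : Finset (Multiset ℕ) :=
  ((Finset.Icc 1 N).sym k).map ⟨fun a : Sym ℕ k => (a : Multiset ℕ), Sym.coe_injective⟩

theorem mem_Mon {N k : ℕ} {w : Multiset ℕ} :
    w ∈ Mon N k ↔ (∀ x ∈ w, x ∈ Finset.Icc 1 N) ∧ w.card = k := by
  rw [Mon, Finset.mem_map]
  constructor
  · rintro ⟨a, ha, rfl⟩
    exact ⟨Finset.mem_sym_iff.1 ha, a.2⟩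
  · rintro ⟨h1, h2⟩
    exact ⟨⟨w, h2⟩, Finset.mem_sym_iff.2 h1, rfl⟩

open Classical in
/-- The monomials of degree `k` on `[m + d + 1]` supported outside `ballq m d U`. -/
noncomputable def badMon (m d k : ℕ) (U : Set (Multiset ℕ)) : Finset (Multiset ℕ) :=
  (Mon (m + d + 1) k).filter fun w => w.toFinset ∉ ballq m d U

open Classical in
/-- The monomials of degree `k` on `[m + d + 1]` whose part in the first `m` variables is
not in `U`. -/
noncomputable def stdBad (m d k : ℕ) (U : Set (Multiset ℕ)) : Finset (Multiset ℕ) :=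
  (Mon (m + d + 1) k).filter fun v => v.filter (· ≤ m) ∉ U

theorem mem_badMon {m d k : ℕ} {U : Set (Multiset ℕ)} {w : Multiset ℕ} :
    w ∈ badMon m d k U ↔ w ∈ Mon (m + d + 1) k ∧ w.toFinset ∉ ballq m d U := by
  classical simp [badMon]

theorem mem_stdBad {m d k : ℕ} {U : Set (Multiset ℕ)} {w : Multiset ℕ} :
    w ∈ stdBad m d k U ↔ w ∈ Mon (m + d + 1) k ∧ w.filter (· ≤ m) ∉ U := by
  classical simp [stdBad]

theorem card_badMon_le {m d k : ℕ} (hk : k ≤ d / 2 + 1) (U : Set (Multiset ℕ)) :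
    (badMon m d k U).card ≤ (stdBad m d k U).card := by
  classical
  apply Finset.card_le_card_of_surjOn fun v =>
    sig 0 (v.filter (· ≤ m)) + (v.filter (¬ · ≤ m)).map (dec m (v.filter (· ≤ m)))
  intro w hw
  obtain ⟨hwM, hwB⟩ := mem_badMon.1 hw
  obtain ⟨hw1, hw2⟩ := mem_Mon.1 hwM
  obtain ⟨u, s, hu, hs, hwe, hsub⟩ := exists_chain_decomposition m d w (by omega) hw1
  have hu' : ∀ x ∈ u, x ≤ m := fun x hx => (Finset.mem_Icc.1 (hu x hx)).2
  have hs' : ∀ x ∈ s, ¬ x ≤ m := fun x hx => by have := (Finset.mem_Icc.1 (hs x hx)).1; omega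
  have e1 : (u + s).filter (· ≤ m) = u := by
    rw [Multiset.filter_add, Multiset.filter_eq_self.2 hu', Multiset.filter_eq_nil.2 hs', add_zero]
  have e2 : (u + s).filter (¬ · ≤ m) = s := by
    rw [Multiset.filter_add, Multiset.filter_eq_self.2 hs',
      Multiset.filter_eq_nil.2 (fun x hx => not_not.2 (hu' x hx)), zero_add]
  refine ⟨u + s, ?_, ?_⟩
  · rw [Finset.mem_coe, mem_stdBad, e1, mem_Mon]
    refine ⟨⟨?_, ?_⟩, ?_⟩
    · intro x hx
      rw [Finset.mem_Icc]
      rcases Multiset.mem_add.1 hx with h | h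
      · have := Finset.mem_Icc.1 (hu x h); omega
      · have := Finset.mem_Icc.1 (hs x h); omega
    · rw [← hw2, hwe, Multiset.card_add, Multiset.card_add, card_sig, Multiset.card_map]
    · intro hU
      exact hwB ⟨u, hU, fun x hx => hsub x (Multiset.mem_toFinset.1 hx)⟩
  · show sig 0 _ + _ = w
    rw [e1, e2, hwe]

theorem complexBoundary_ballq_subset (m d : ℕ) (U : Set (Multiset ℕ)) :
    complexBoundary d (ballq m d U) ⊆ ballq m d U := by
  rintro F ⟨G, hFG, ⟨u, hu, hG⟩, -⟩
  exact ⟨u, hu, hFG.trans hG⟩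

/-- The sequence `q` raised by one along the end of the block of constancy containing `t₀`. -/
def shiftRight (q : ℕ → ℕ) (t₀ t : ℕ) : ℕ := if t₀ ≤ t ∧ q t = q t₀ then q t + 1 else q t

/-- The sequence `q` lowered by one along the start of the block of constancy containing `t₀`. -/
def shiftLeft (q : ℕ → ℕ) (t₀ t : ℕ) : ℕ := if t ≤ t₀ ∧ q t = q t₀ then q t - 1 else q t

theorem shiftRight_mono {q : ℕ → ℕ} (hq : Monotone q) (t₀ : ℕ) : Monotone (shiftRight q t₀) := by
  intro s t hst
  have := hq hst
  unfold shiftRight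
  split_ifs <;> omega

theorem shiftLeft_mono {q : ℕ → ℕ} (hq : Monotone q) (t₀ : ℕ) : Monotone (shiftLeft q t₀) := by
  intro s t hst
  have := hq hst
  unfold shiftLeft
  split_ifs <;> omega

theorem facet_erase_subset_shiftRight {d : ℕ} {q : ℕ → ℕ} (hq : Monotone q) (t₀ : ℕ) :
    (facet d q).erase (q t₀ + 2 * t₀) ⊆ facet d (shiftRight q t₀) := by
  intro x hx
  obtain ⟨hne, hx⟩ := Finset.mem_erase.1 hx
  obtain ⟨s, hs, rfl⟩ := mem_facet.1 hx
  rw [mem_facet]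
  by_cases h : t₀ ≤ s / 2 ∧ q (s / 2) = q t₀
  · have h1 : s ≠ 2 * t₀ := by rintro rfl; exact hne (by rw [h.2])
    have h2 : t₀ ≤ (s - 1) / 2 := by omega
    have h4 := hq h2
    have h5 := hq (show (s - 1) / 2 ≤ s / 2 by omega)
    refine ⟨s - 1, by omega, ?_⟩
    rw [shiftRight, if_pos ⟨h2, by omega⟩]
    omega
  · exact ⟨s, hs, by rw [shiftRight, if_neg h]⟩

theorem notMem_facet_shiftRight {d : ℕ} {q : ℕ → ℕ} (hq : Monotone q) (t₀ : ℕ) :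
    q t₀ + 2 * t₀ ∉ facet d (shiftRight q t₀) := by
  intro hx
  obtain ⟨s, hs, hx⟩ := mem_facet.1 hx
  unfold shiftRight at hx
  split_ifs at hx with h
  · omega
  · rcases le_or_gt t₀ (s / 2) with h1 | h1
    · have := hq h1; omega
    · have := hq h1.le; omega

theorem facet_erase_subset_shiftLeft {d : ℕ} {q : ℕ → ℕ} (hq : Monotone q) {t₀ : ℕ}
    (hd : 2 * t₀ + 1 ≤ d) (h0 : 0 < q t₀) :
    (facet d q).erase (q t₀ + 2 * t₀ + 1) ⊆ facet d (shiftLeft q t₀) := by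
  intro x hx
  obtain ⟨hne, hx⟩ := Finset.mem_erase.1 hx
  obtain ⟨s, hs, rfl⟩ := mem_facet.1 hx
  rw [mem_facet]
  by_cases h : s / 2 ≤ t₀ ∧ q (s / 2) = q t₀
  · have h1 : s ≠ 2 * t₀ + 1 := by rintro rfl; exact hne (by rw [h.2]; ring)
    have h2 : (s + 1) / 2 ≤ t₀ := by omega
    have h4 := hq h2
    have h5 := hq (show s / 2 ≤ (s + 1) / 2 by omega)
    refine ⟨s + 1, by omega, ?_⟩
    rw [shiftLeft, if_pos ⟨h2, by omega⟩]
    omega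
  · exact ⟨s, hs, by rw [shiftLeft, if_neg h]⟩

theorem notMem_facet_shiftLeft {d : ℕ} {q : ℕ → ℕ} (hq : Monotone q) {t₀ : ℕ} (h0 : 0 < q t₀) :
    q t₀ + 2 * t₀ + 1 ∉ facet d (shiftLeft q t₀) := by
  intro hx
  obtain ⟨s, hs, hx⟩ := mem_facet.1 hx
  unfold shiftLeft at hx
  split_ifs at hx with h
  · omega
  · rcases le_or_gt (s / 2) t₀ with h1 | h1
    · have := hq h1; omega
    · have := hq h1.le; omega

theorem mem_ballq_card_eq {m d : ℕ} {U : Set (Multiset ℕ)} (hU : ShiftClosed m U) {H : Finset ℕ}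
    (h : H ∈ ballq m d U) (hc : H.card = d + 1) : ∃ u ∈ U, H = facet d (qf (m + 1) u) := by
  obtain ⟨u, hu, hsub⟩ := h
  refine ⟨u, hu, Finset.eq_of_subset_of_card_le hsub ?_⟩
  rw [card_facet (qf_mono (hU.le_of_mem u hu)), hc]

theorem facet_mem_ballq {m d : ℕ} {U : Set (Multiset ℕ)} {u : Multiset ℕ} (hu : u ∈ U) :
    facet d (qf (m + 1) u) ∈ ballq m d U := ⟨u, hu, Finset.Subset.refl _⟩

/-- Deleting the first vertex of a final segment `[m + 1 + 2 t₀, m + 1 + d]` of a facet gives a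
boundary ridge. -/
theorem facet_eq_of_erase_subset {m d t₀ : ℕ} (ht₀ : 2 * t₀ ≤ d) {q q₂ : ℕ → ℕ} (hq : Monotone q)
    (hq₂ : Monotone q₂) (hqm : q t₀ = m + 1) (hm : ∀ t, q t ≤ m + 1) (hm₂ : ∀ t, q₂ t ≤ m + 1)
    (hev : d = 2 * t₀ → q₂ t₀ = m + 1)
    (h : (facet d q).erase (q t₀ + 2 * t₀) ⊆ facet d q₂) : facet d q₂ = facet d q := by
  have hp : q t₀ + 2 * t₀ ∈ facet d q₂ := by
    rw [hqm]
    by_contra hp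
    have h1 : q₂ t₀ ≤ m := by
      by_contra hcon
      refine hp (mem_facet.2 ⟨2 * t₀, ht₀, ?_⟩)
      have := hm₂ t₀
      rw [Nat.mul_div_cancel_left _ two_pos]; omega
    have hd : 2 * t₀ + 1 ≤ d := by
      by_contra hcon
      have := hev (by omega)
      omega
    have h2 : q₂ t₀ + (2 * t₀ + 1) < m + 1 + 2 * t₀ := by
      refine lt_of_le_of_ne (by omega) fun heq => hp (mem_facet.2 ⟨2 * t₀ + 1, hd, ?_⟩)
      rw [← heq, show (2 * t₀ + 1) / 2 = t₀ by omega]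
    have hsub : (Finset.range (2 * t₀ + 2)).image (fun s => q₂ (s / 2) + s) ∪
        Finset.Icc (m + 1 + 2 * t₀ + 1) (m + 1 + d) ⊆ facet d q₂ := by
      apply Finset.union_subset
      · exact Finset.image_subset_image (Finset.range_subset_range.2 (by omega))
      · intro x hx
        rw [Finset.mem_Icc] at hx
        refine h (Finset.mem_erase.2 ⟨by omega, mem_facet.2 ⟨x - (m + 1), by omega, ?_⟩⟩)
        have := hq (show t₀ ≤ (x - (m + 1)) / 2 by omega)
        have := hm ((x - (m + 1)) / 2)
        omega
    have hdis : Disjoint ((Finset.range (2 * t₀ + 2)).image (fun s => q₂ (s / 2) + s))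
        (Finset.Icc (m + 1 + 2 * t₀ + 1) (m + 1 + d)) := by
      rw [Finset.disjoint_left]
      intro x hx hx'
      obtain ⟨s, hs, rfl⟩ := Finset.mem_image.1 hx
      rw [Finset.mem_range] at hs
      rw [Finset.mem_Icc] at hx'
      have := hq₂ (show s / 2 ≤ t₀ by omega)
      omega
    have hc := Finset.card_le_card hsub
    rw [Finset.card_union_of_disjoint hdis, card_facet hq₂,
      Finset.card_image_of_injective _ (facet_strictMono hq₂).injective, Finset.card_range,
      Nat.card_Icc] at hc
    omega
  symm
  apply Finset.eq_of_subset_of_card_le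
  · intro x hx
    by_cases hxp : x = q t₀ + 2 * t₀
    · rwa [hxp]
    · exact h (Finset.mem_erase.2 ⟨hxp, hx⟩)
  · rw [card_facet hq, card_facet hq₂]

theorem mem_complexBoundary_of_card_le {m d : ℕ} {U : Set (Multiset ℕ)} (hU : ShiftClosed m U)
    (hdeg : ∀ u ∈ U, 2 * u.card ≤ d + 1) {F : Finset ℕ} (hF : F ∈ ballq m d U)
    (hc : F.card ≤ d / 2) : F ∈ complexBoundary d (ballq m d U) := by
  obtain ⟨u, hu, hsub⟩ := hF
  have key : ∀ N : ℕ, ∀ u ∈ U, F ⊆ facet d (qf (m + 1) u) →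
      (d / 2 + 1) * (m + 1) ≤ N + ∑ t ∈ Finset.range (d / 2 + 1), qf (m + 1) u t →
      F ∈ complexBoundary d (ballq m d U) := by
    intro N
    induction N using Nat.strong_induction_on with
    | _ N ih =>
    intro u hu hsub hN
    have hq := qf_mono (hU.le_of_mem u hu)
    have hqm := qf_le (hU.le_of_mem u hu)
    obtain ⟨t₀, ht₀, hp⟩ : ∃ t₀ < d / 2 + 1, qf (m + 1) u t₀ + 2 * t₀ ∉ F := by
      by_contra! hcon
      have : ((Finset.range (d / 2 + 1)).image fun t => qf (m + 1) u t + 2 * t).card ≤ F.card :=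
        Finset.card_le_card fun x hx => by
          obtain ⟨t, ht, rfl⟩ := Finset.mem_image.1 hx
          exact hcon t (Finset.mem_range.1 ht)
      rw [Finset.card_image_of_injective, Finset.card_range] at this
      · omega
      · refine StrictMono.injective fun a b hab => ?_
        have := hq hab.le
        show _ + _ < _ + _
        omega
    have hFe : F ⊆ (facet d (qf (m + 1) u)).erase (qf (m + 1) u t₀ + 2 * t₀) := fun x hx =>
      Finset.mem_erase.2 ⟨fun h => hp (h ▸ hx), hsub hx⟩
    rcases Nat.lt_or_ge (qf (m + 1) u t₀) (m + 1) with hlt | hge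
    · obtain ⟨u', hu', hval⟩ := hU.realize (d := d) hu (shiftRight_mono hq t₀)
        (fun t => by unfold shiftRight; have := hqm t; split_ifs <;> omega)
        (fun t _ => by unfold shiftRight; split_ifs <;> omega)
      have hsum : ∑ t ∈ Finset.range (d / 2 + 1), qf (m + 1) u t <
          ∑ t ∈ Finset.range (d / 2 + 1), qf (m + 1) u' t := by
        apply Finset.sum_lt_sum
        · intro t ht
          rw [Finset.mem_range] at ht
          rw [hval t (by omega)]
          unfold shiftRight; split_ifs <;> omega
        · refine ⟨t₀, Finset.mem_range.2 ht₀, ?_⟩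
          rw [hval t₀ (by omega), shiftRight, if_pos ⟨le_rfl, rfl⟩]
          omega
      have hle : ∑ t ∈ Finset.range (d / 2 + 1), qf (m + 1) u' t ≤ (d / 2 + 1) * (m + 1) := by
        have := Finset.sum_le_card_nsmul (Finset.range (d / 2 + 1)) (qf (m + 1) u') (m + 1)
          fun t _ => qf_le (hU.le_of_mem u' hu') t
        simpa using this
      refine ih (N - 1) (by omega) u' hu' ?_ (by omega)
      rw [facet_congr hval]
      exact hFe.trans (facet_erase_subset_shiftRight hq t₀)
    · have hqt : qf (m + 1) u t₀ = m + 1 := le_antisymm (hqm t₀) hge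
      have hpm : qf (m + 1) u t₀ + 2 * t₀ ∈ facet d (qf (m + 1) u) :=
        mem_facet.2 ⟨2 * t₀, by omega, by rw [Nat.mul_div_cancel_left _ two_pos]⟩
      refine ⟨_, hFe, ⟨u, hu, Finset.erase_subset _ _⟩, ?_, ?_⟩
      · rw [Finset.card_erase_of_mem hpm, card_facet hq]; rfl
      · rw [Set.ncard_eq_one]
        refine ⟨facet d (qf (m + 1) u), Set.eq_singleton_iff_unique_mem.2
          ⟨⟨facet_mem_ballq hu, card_facet hq, Finset.erase_subset _ _⟩, ?_⟩⟩
        rintro H ⟨hH, hHc, hHs⟩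
        obtain ⟨u₂, hu₂, rfl⟩ := mem_ballq_card_eq hU hH hHc
        refine facet_eq_of_erase_subset (by omega) hq (qf_mono (hU.le_of_mem u₂ hu₂)) hqt hqm
          (qf_le (hU.le_of_mem u₂ hu₂)) (fun h => ?_) hHs
        have := hdeg u₂ hu₂
        exact qf_of_ge (by omega)
  exact key ((d / 2 + 1) * (m + 1)) u hu hsub (Nat.le_add_right _ _)

theorem sig_one_notMem_complexBoundary {m d : ℕ} {U : Set (Multiset ℕ)} (hU : ShiftClosed m U)
    {u : Multiset ℕ} (hu : u ∈ U) (hd : 2 * u.card = d + 1) :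
    (sig 1 u).toFinset ∉ complexBoundary d (ballq m d U) := by
  rintro ⟨G, hsig, ⟨u₂, hu₂, hG⟩, hGc, hone⟩
  have hq := qf_mono (hU.le_of_mem u hu)
  have hq₂ := qf_mono (hU.le_of_mem u₂ hu₂)
  have hqm₂ := qf_le (hU.le_of_mem u₂ hu₂)
  have hmemG : ∀ t < u.card, qf (m + 1) u t + 2 * t + 1 ∈ G := fun t ht =>
    hsig (by rw [Multiset.mem_toFinset, mem_sig (D := m + 1)]; exact ⟨t, ht, rfl⟩)
  obtain ⟨s, hs, hlt⟩ := le_of_chain_subset (a := qf (m + 1) u) (r := u.card)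
    (fun _ _ h _ => hq h) hq₂ 1 (fun t ht => hG (hmemG t ht))
  have hle : ∀ y t, t + y + 1 = u.card → s t / 2 ≤ t := by
    intro y
    induction y with
    | zero => intro t ht; have := (hs t (by omega)).1; omega
    | succ y ih =>
      intro t ht
      have := ih (t + 1) (by omega)
      have := hlt t (by omega)
      omega
  have hst : ∀ t < u.card, qf (m + 1) u₂ t + s t = qf (m + 1) u t + 2 * t + 1 ∧
      (s t = 2 * t ∨ s t = 2 * t + 1) := by
    intro t ht
    obtain ⟨-, h1, h2⟩ := hs t ht
    have h3 := hle (u.card - t - 1) t (by omega)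
    have h4 : s t / 2 = t := by omega
    rw [h4] at h1
    exact ⟨h1, by omega⟩
  obtain ⟨H, hH⟩ := Set.ncard_eq_one.1 hone
  have huniq : ∀ u' ∈ U, G ⊆ facet d (qf (m + 1) u') → facet d (qf (m + 1) u') = H := by
    intro u' hu' h
    have : facet d (qf (m + 1) u') ∈ {H | H ∈ ballq m d U ∧ H.card = d + 1 ∧ G ⊆ H} :=
      ⟨facet_mem_ballq hu', card_facet (qf_mono (hU.le_of_mem u' hu')), h⟩
    rwa [hH] at this
  have hdiff : ∀ u' ∈ U, G ⊆ facet d (qf (m + 1) u') →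
      facet d (qf (m + 1) u') = facet d (qf (m + 1) u₂) := fun u' hu' h =>
    (huniq u' hu' h).trans (huniq u₂ hu₂ hG).symm
  obtain ⟨e, he, heG⟩ : ∃ e ∈ facet d (qf (m + 1) u₂), e ∉ G := by
    by_contra! hcon
    have := Finset.card_le_card hcon
    rw [card_facet hq₂] at this
    omega
  have hGe : G ⊆ (facet d (qf (m + 1) u₂)).erase e := fun x hx =>
    Finset.mem_erase.2 ⟨fun h => heG (h ▸ hx), hG hx⟩
  obtain ⟨y, hy, hye⟩ := mem_facet.1 he
  have ht₀ : y / 2 < u.card := by omega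
  obtain ⟨h1, h2⟩ := hst (y / 2) ht₀
  have hne : y ≠ s (y / 2) := by
    intro h
    rw [← h, hye] at h1
    exact heG (h1 ▸ hmemG _ ht₀)
  have hum := hU.le_of_mem u hu _ (qf_mem (D := m + 1) ht₀)
  rcases Nat.even_or_odd' y with ⟨t₀, rfl | rfl⟩
  · rw [Nat.mul_div_cancel_left _ two_pos] at *
    obtain ⟨u', hu', hval⟩ := hU.realize (d := d) hu₂ (shiftRight_mono hq₂ t₀)
      (fun t => by unfold shiftRight; have := hqm₂ t; split_ifs <;> omega)
      (fun t _ => by unfold shiftRight; split_ifs <;> omega)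
    have h3 := hdiff u' hu' (by
      rw [facet_congr hval]
      rw [← hye] at hGe
      exact hGe.trans (facet_erase_subset_shiftRight hq₂ t₀))
    rw [facet_congr hval] at h3
    refine notMem_facet_shiftRight (d := d) hq₂ t₀ ?_
    rw [h3, hye]
    exact he
  · rw [show (2 * t₀ + 1) / 2 = t₀ by omega] at *
    have h0 : 0 < qf (m + 1) u₂ t₀ := by omega
    obtain ⟨u', hu', hval⟩ := hU.realize (d := d) hu (shiftLeft_mono hq₂ t₀)
      (fun t => by unfold shiftLeft; have := hqm₂ t; split_ifs <;> omega)
      (fun t ht => by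
        have := (hst t (by omega))
        unfold shiftLeft
        split_ifs with h
        · have := hq h.1
          omega
        · omega)
    rw [← add_assoc] at hye
    have h3 := hdiff u' hu' (by
      rw [facet_congr hval]
      rw [← hye] at hGe
      exact hGe.trans (facet_erase_subset_shiftLeft hq₂ hy h0))
    rw [facet_congr hval] at h3
    refine notMem_facet_shiftLeft (d := d) hq₂ h0 ?_
    rw [h3, hye]
    exact he

open MvPolynomial

theorem degRevLexLT_iff {σ : Type*} [LinearOrder σ] (u v : σ →₀ ℕ) :
    DegRevLexLT u v ↔ u.degree < v.degree ∨
      (u.degree = v.degree ∧ ∃ k, v k < u k ∧ ∀ l, k < l → u l = v l) := Iff.rfl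

theorem degRevLexLT_trans {σ : Type*} [LinearOrder σ] {u v w : σ →₀ ℕ}
    (h1 : DegRevLexLT u v) (h2 : DegRevLexLT v w) : DegRevLexLT u w := by
  rw [degRevLexLT_iff] at *
  rcases h1 with h1 | ⟨h1, k, hk, hk'⟩
  · rcases h2 with h2 | ⟨h2, -⟩
    · exact Or.inl (h1.trans h2)
    · exact Or.inl (h2 ▸ h1)
  · rcases h2 with h2 | ⟨h2, l, hl, hl'⟩
    · exact Or.inl (h1 ▸ h2)
    · refine Or.inr ⟨h1.trans h2, ?_⟩
      rcases lt_trichotomy k l with h | rfl | h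
      · exact ⟨l, by rw [hk' l h]; exact hl, fun j hj => (hk' j (h.trans hj)).trans (hl' j hj)⟩
      · exact ⟨k, hl.trans hk, fun j hj => (hk' j hj).trans (hl' j hj)⟩
      · exact ⟨k, by rw [← hl' k h]; exact hk, fun j hj => (hk' j hj).trans (hl' j (h.trans hj))⟩

theorem degRevLexLT_ne {σ : Type*} [LinearOrder σ] {u v : σ →₀ ℕ} (h : DegRevLexLT u v) :
    u ≠ v := by
  rintro rfl
  rw [degRevLexLT_iff] at h
  rcases h with h | ⟨-, k, hk, -⟩ <;> omega

theorem degRevLexLT_add {σ : Type*} [LinearOrder σ] {u v : σ →₀ ℕ} (h : DegRevLexLT u v)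
    (w : σ →₀ ℕ) : DegRevLexLT (w + u) (w + v) := by
  rw [degRevLexLT_iff] at *
  rw [map_add, map_add]
  rcases h with h | ⟨h, k, hk, hk'⟩
  · left; omega
  · right
    refine ⟨by omega, k, by simpa using hk, fun l hl => by simp [hk' l hl]⟩

theorem degRevLexLT_total {N : ℕ} {u v : Fin N →₀ ℕ} (h : u ≠ v) :
    DegRevLexLT u v ∨ DegRevLexLT v u := by
  simp only [degRevLexLT_iff]
  rcases lt_trichotomy u.degree v.degree with hd | hd | hd
  · exact Or.inl (Or.inl hd)
  · have hne : (Finset.univ.filter fun k => u k ≠ v k).Nonempty := by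
      by_contra hcon
      rw [Finset.not_nonempty_iff_eq_empty, Finset.filter_eq_empty_iff] at hcon
      exact h (Finsupp.ext fun k => not_not.1 (hcon (Finset.mem_univ k)))
    obtain ⟨k, hk, hmax⟩ := Finset.exists_max_image _ id hne
    rw [Finset.mem_filter] at hk
    have hl : ∀ l, k < l → u l = v l := by
      intro l hl
      by_contra hcon
      exact absurd (hmax l (by simpa using hcon)) (not_le.2 hl)
    rcases lt_or_gt_of_ne hk.2 with h' | h'
    · exact Or.inr (Or.inr ⟨hd.symm, k, h', fun l h => (hl l h).symm⟩)
    · exact Or.inl (Or.inr ⟨hd, k, h', hl⟩)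
  · exact Or.inr (Or.inl hd)

theorem exists_degRevLex_max {N : ℕ} (s : Finset (Fin N →₀ ℕ)) (hs : s.Nonempty) :
    ∃ u ∈ s, ∀ v ∈ s, v ≠ u → DegRevLexLT v u := by
  induction hs using Finset.Nonempty.cons_induction with
  | singleton a => exact ⟨a, by simp, by simp⟩
  | cons a s ha hs ih =>
    obtain ⟨u, hu, hmax⟩ := ih
    have hau : a ≠ u := fun h => ha (h ▸ hu)
    rcases degRevLexLT_total hau with h | h
    · refine ⟨u, Finset.mem_cons_of_mem hu, fun v hv hvu => ?_⟩
      rcases Finset.mem_cons.1 hv with rfl | hv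
      · exact h
      · exact hmax v hv hvu
    · refine ⟨a, Finset.mem_cons_self _ _, fun v hv hva => ?_⟩
      rcases Finset.mem_cons.1 hv with rfl | hv
      · exact absurd rfl hva
      · by_cases hvu : v = u
        · rwa [hvu]
        · exact degRevLexLT_trans (hmax v hv hvu) h

section Leads

variable {N : ℕ} {K : Type*} [Field K]

/-- `x^u` is the leading monomial of `f` in the degree reverse lexicographic order. -/
def IsLead (f : MvPolynomial (Fin N) K) (u : Fin N →₀ ℕ) : Prop :=
  u ∈ f.support ∧ ∀ v ∈ f.support, v ≠ u → DegRevLexLT v u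

theorem exists_isLead {f : MvPolynomial (Fin N) K} (hf : f ≠ 0) : ∃ u, IsLead f u :=
  let ⟨u, h1, h2⟩ := exists_degRevLex_max f.support (support_nonempty.2 hf)
  ⟨u, h1, h2⟩

theorem IsLead.monomial_mul {f : MvPolynomial (Fin N) K} {u : Fin N →₀ ℕ} (h : IsLead f u)
    (w : Fin N →₀ ℕ) : IsLead (monomial w 1 * f) (w + u) := by
  constructor
  · rw [mem_support_iff, coeff_monomial_mul, one_mul]
    exact mem_support_iff.1 h.1
  · intro v hv hne
    rw [mem_support_iff, coeff_monomial_mul'] at hv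
    split_ifs at hv with hwv
    · rw [one_mul] at hv
      obtain ⟨v', rfl⟩ := exists_add_of_le hwv
      rw [add_tsub_cancel_left] at hv
      exact degRevLexLT_add (h.2 v' (mem_support_iff.2 hv) fun h' => hne (by rw [h'])) w
    · exact absurd rfl hv

theorem monomial_mem_initialIdeal_iff {I : Ideal (MvPolynomial (Fin N) K)} {u : Fin N →₀ ℕ} :
    monomial u (1 : K) ∈ initialIdeal I ↔ ∃ f ∈ I, IsLead f u := by
  constructor
  · intro h
    have hset : {m | ∃ f ∈ I, ∃ u ∈ f.support, m = monomial u (1 : K) ∧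
        ∀ v ∈ f.support, v ≠ u → DegRevLexLT v u} =
        (fun s => monomial s (1 : K)) '' {s | ∃ f ∈ I, IsLead f s} := by
      ext m
      constructor
      · rintro ⟨f, hf, u, hu, rfl, h⟩; exact ⟨u, ⟨f, hf, hu, h⟩, rfl⟩
      · rintro ⟨u, ⟨f, hf, hu, h⟩, rfl⟩; exact ⟨f, hf, u, hu, rfl, h⟩
    rw [initialIdeal, hset, mem_ideal_span_monomial_image] at h
    obtain ⟨s, ⟨f, hf, hl⟩, hsu⟩ := h u (by simp)
    obtain ⟨w, rfl⟩ := exists_add_of_le hsu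
    refine ⟨monomial w 1 * f, I.mul_mem_left _ hf, ?_⟩
    rw [add_comm]
    exact hl.monomial_mul w
  · rintro ⟨f, hf, hu, h⟩
    exact Ideal.subset_span ⟨f, hf, u, hu, rfl, h⟩

open Classical in
theorem card_le_finrank_of_leads {W : Submodule K (MvPolynomial (Fin N) K)} [Module.Finite K W]
    (E : Finset (Fin N →₀ ℕ)) (hE : ∀ u ∈ E, ∃ f ∈ W, IsLead f u) :
    E.card ≤ Module.finrank K W := by
  choose! f hf using hE
  have hli : LinearIndependent K fun u : E => (⟨f u, (hf u u.2).1⟩ : W) := by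
    rw [Fintype.linearIndependent_iff]
    intro g hg
    by_contra! hcon
    obtain ⟨i, hi⟩ := hcon
    obtain ⟨u, hu, hmax⟩ := exists_degRevLex_max
      ((Finset.univ.filter fun i : E => g i ≠ 0).image Subtype.val)
      ⟨i, Finset.mem_image.2 ⟨i, by simpa using hi, rfl⟩⟩
    obtain ⟨u, hgu, rfl⟩ := Finset.mem_image.1 hu
    have h0 := congrArg (fun x : W => coeff (u : Fin N →₀ ℕ) (x : MvPolynomial (Fin N) K)) hg
    simp only [Submodule.coe_sum, Submodule.coe_smul, coeff_sum, coeff_smul, Submodule.coe_zero,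
      coeff_zero, smul_eq_mul] at h0
    rw [Finset.sum_eq_single u] at h0
    · have := mem_support_iff.1 (hf u u.2).2.1
      rcases mul_eq_zero.1 h0 with h | h
      · exact (Finset.mem_filter.1 hgu).2 h
      · exact this h
    · intro v _ hvu
      by_cases hgv : g v = 0
      · rw [hgv, zero_mul]
      · have hvu' : (v : Fin N →₀ ℕ) ≠ u := fun h => hvu (Subtype.ext h)
        have h1 := hmax v (Finset.mem_image.2 ⟨v, by simpa using hgv, rfl⟩) hvu'
        by_cases hc : coeff (u : Fin N →₀ ℕ) (f v) = 0
        · rw [hc, mul_zero]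
        · have h2 := (hf v v.2).2.2 u (mem_support_iff.2 hc) hvu'.symm
          exact absurd rfl (degRevLexLT_ne (degRevLexLT_trans h1 h2))
    · simp
  simpa using hli.fintype_card_le_finrank

theorem finrank_le_card_of_leads {W : Submodule K (MvPolynomial (Fin N) K)}
    (E : Finset (Fin N →₀ ℕ)) (hE : ∀ f ∈ W, ∀ u, IsLead f u → u ∈ E) :
    Module.finrank K W ≤ E.card := by
  have hinj : Function.Injective
      ((LinearMap.pi fun u : E => lcoeff K (u : Fin N →₀ ℕ)).comp W.subtype) := by
    rw [← LinearMap.ker_eq_bot, LinearMap.ker_eq_bot']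
    intro f hf
    by_contra hne
    obtain ⟨u, hu⟩ := exists_isLead (f := (f : MvPolynomial (Fin N) K)) (by simpa using hne)
    have := congrFun hf ⟨u, hE f f.2 u hu⟩
    exact mem_support_iff.1 hu.1 this
  have := LinearMap.finrank_le_finrank_of_injective hinj
  simpa using this

end Leads

/-- The monomial with exponent vector `e`, as a multiset of indices. -/
noncomputable def unexp {N : ℕ} (e : Fin N →₀ ℕ) : Multiset ℕ :=
  (Finsupp.toMultiset e).map fun a : Fin N => (a : ℕ) + 1

theorem multisetToExp_apply (N : ℕ) (w : Multiset ℕ) (a : Fin N) :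
    multisetToExp N w a = w.count ((a : ℕ) + 1) := rfl

theorem multisetToExp_add (N : ℕ) (u v : Multiset ℕ) :
    multisetToExp N (u + v) = multisetToExp N u + multisetToExp N v := by
  ext a
  simp [multisetToExp_apply]

theorem multisetToExp_unexp {N : ℕ} (e : Fin N →₀ ℕ) : multisetToExp N (unexp e) = e := by
  ext a
  rw [multisetToExp_apply, unexp]
  rw [Multiset.count_map_eq_count' (fun a : Fin N => (a : ℕ) + 1) _
    (fun a b h => Fin.ext (by simpa using h)), Finsupp.count_toMultiset]

theorem mem_unexp {N : ℕ} (e : Fin N →₀ ℕ) : ∀ x ∈ unexp e, x ∈ Finset.Icc 1 N := by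
  intro x hx
  obtain ⟨a, -, rfl⟩ := Multiset.mem_map.1 hx
  rw [Finset.mem_Icc]
  omega

theorem multisetToExp_inj {N : ℕ} {u v : Multiset ℕ} (hu : ∀ x ∈ u, x ∈ Finset.Icc 1 N)
    (hv : ∀ x ∈ v, x ∈ Finset.Icc 1 N) (h : multisetToExp N u = multisetToExp N v) : u = v := by
  ext x
  by_cases hx : x ∈ Finset.Icc 1 N
  · rw [Finset.mem_Icc] at hx
    have := DFunLike.congr_fun h ⟨x - 1, by omega⟩
    rw [multisetToExp_apply, multisetToExp_apply] at this
    simpa [Nat.sub_add_cancel hx.1] using this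
  · rw [Multiset.count_eq_zero.2 fun h => hx (hu x h), Multiset.count_eq_zero.2 fun h => hx (hv x h)]

theorem unexp_multisetToExp {N : ℕ} {u : Multiset ℕ} (hu : ∀ x ∈ u, x ∈ Finset.Icc 1 N) :
    unexp (multisetToExp N u) = u :=
  multisetToExp_inj (mem_unexp _) hu (multisetToExp_unexp _)

theorem degree_multisetToExp {N : ℕ} {u : Multiset ℕ} (hu : ∀ x ∈ u, x ∈ Finset.Icc 1 N) :
    (multisetToExp N u).degree = u.card := by
  conv_rhs => rw [← unexp_multisetToExp hu, unexp, Multiset.card_map, Finsupp.card_toMultiset]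
  rfl

/-- A leading monomial is supported in the first `c` variables as soon as some monomial of the
same degree is. -/
theorem IsLead.le_of_mem {N : ℕ} {K : Type*} [Field K] {f : MvPolynomial (Fin N) K}
    {v w : Multiset ℕ} {k c : ℕ} (hv : v ∈ Mon N k) (hw : w ∈ Mon N k) (hwc : ∀ x ∈ w, x ≤ c)
    (hl : IsLead f (multisetToExp N v)) (hwf : multisetToExp N w ∈ f.support) :
    ∀ x ∈ v, x ≤ c := by
  rw [mem_Mon] at hv hw
  intro x hx
  by_contra hxc
  have hx1 := Finset.mem_Icc.1 (hv.1 x hx)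
  have hne : multisetToExp N w ≠ multisetToExp N v := by
    intro h
    exact hxc (hwc x (by rwa [multisetToExp_inj hw.1 hv.1 h]))
  rcases (degRevLexLT_iff _ _).1 (hl.2 _ hwf hne) with h | ⟨-, a, ha, ha'⟩
  · rw [degree_multisetToExp hw.1, degree_multisetToExp hv.1] at h; omega
  · have hac : (a : ℕ) + 1 ≤ c := by
      apply hwc
      rw [multisetToExp_apply, multisetToExp_apply] at ha
      exact Multiset.count_pos.1 (by omega)
    have := ha' ⟨x - 1, by omega⟩ (Fin.lt_def.2 (by show (a : ℕ) < x - 1; omega))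
    rw [multisetToExp_apply, multisetToExp_apply] at this
    simp only [Nat.sub_add_cancel hx1.1] at this
    have h1 := Multiset.count_pos.2 hx
    have h2 : x ∈ w := Multiset.count_pos.1 (by omega)
    exact hxc (hwc x h2)

section Good

variable {N : ℕ} {K : Type*} [Field K]

/-- The linear form with coefficients `c a`. -/
noncomputable def lin {R : Type*} [CommRing R] (c : ℕ → Fin N → R) (a : ℕ) :
    MvPolynomial (Fin N) R := ∑ i, C (c a i) * X i

/-- The product of linear forms indexed by `w`. -/
noncomputable def pr {R : Type*} [CommRing R] (c : ℕ → Fin N → R) (w : Multiset ℕ) :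
    MvPolynomial (Fin N) R := (w.map (lin c)).prod

theorem map_lin {R R' : Type*} [CommRing R] [CommRing R'] (f : R →+* R') (c : ℕ → Fin N → R)
    (a : ℕ) : map f (lin c a) = lin (fun a i => f (c a i)) a := by
  simp [lin]

theorem map_pr {R R' : Type*} [CommRing R] [CommRing R'] (f : R →+* R') (c : ℕ → Fin N → R)
    (w : Multiset ℕ) : map f (pr c w) = pr (fun a i => f (c a i)) w := by
  rw [pr, map_multiset_prod, Multiset.map_map, pr]
  congr 1
  exact Multiset.map_congr rfl fun a _ => map_lin f c a

theorem pr_cons {R : Type*} [CommRing R] (c : ℕ → Fin N → R) (a : ℕ) (w : Multiset ℕ) :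
    pr c (a ::ₘ w) = lin c a * pr c w := by simp [pr]

theorem pr_congr {R : Type*} [CommRing R] {c c' : ℕ → Fin N → R} {w : Multiset ℕ}
    (h : ∀ a ∈ w, c a = c' a) : pr c w = pr c' w := by
  rw [pr, pr]
  congr 1
  exact Multiset.map_congr rfl fun a ha => by rw [lin, lin, h a ha]

/-- The coefficients of a polynomial at the monomials of degree `k` in the first `m` variables. -/
noncomputable def rest (N : ℕ) (K : Type*) [Field K] (m k : ℕ) :
    MvPolynomial (Fin N) K →ₗ[K] (Mon m k → K) :=
  LinearMap.pi fun w => lcoeff K (multisetToExp N w)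

theorem rest_apply (m k : ℕ) (f : MvPolynomial (Fin N) K) (w : Mon m k) :
    rest N K m k f w = coeff (multisetToExp N w) f := rfl

/-- The family `v u`, `u ∈ Mon m k`, is a basis modulo the polynomials without monomials
in `Mon m k`. -/
def Good (m k : ℕ) (v : Multiset ℕ → MvPolynomial (Fin N) K) : Prop :=
  LinearIndependent K fun u : Mon m k => rest N K m k (v u)

theorem good_iff {m k : ℕ} {v : Multiset ℕ → MvPolynomial (Fin N) K} :
    Good m k v ↔ ∀ a : Multiset ℕ → K,
      (∀ w ∈ Mon m k, ∑ u ∈ Mon m k, a u * coeff (multisetToExp N w) (v u) = 0) →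
      ∀ u ∈ Mon m k, a u = 0 := by
  rw [Good, Fintype.linearIndependent_iff]
  constructor
  · intro h a ha u hu
    refine h (fun u => a u) ?_ ⟨u, hu⟩
    funext w
    rw [Finset.sum_apply, Pi.zero_apply, ← ha w w.2]
    exact Finset.sum_coe_sort (Mon m k) fun u => a u * coeff (multisetToExp N w) (v u)
  · intro h g hg u
    classical
    have := h (fun u => if hu : u ∈ Mon m k then g ⟨u, hu⟩ else 0) ?_ u u.2
    · simpa using this
    · intro w hw
      have h1 := congrFun hg ⟨w, hw⟩
      rw [Finset.sum_apply, Pi.zero_apply] at h1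
      rw [← h1, ← Finset.sum_coe_sort]
      refine Finset.sum_congr rfl fun u _ => ?_
      simp [rest_apply]

theorem good_congr {m k : ℕ} {v v' : Multiset ℕ → MvPolynomial (Fin N) K}
    (h : ∀ u ∈ Mon m k, v u = v' u) : Good m k v ↔ Good m k v' := by
  have : (fun u : Mon m k => rest N K m k (v u)) = fun u : Mon m k => rest N K m k (v' u) := by
    funext u; rw [h u u.2]
  rw [Good, Good, this]

theorem Good.of_span {m k : ℕ} {v w : Multiset ℕ → MvPolynomial (Fin N) K} (hw : Good m k w)
    (h : ∀ u ∈ Mon m k, w u ∈ Submodule.span K (v '' (Mon m k : Set (Multiset ℕ)))) :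
    Good m k v := by
  have hcard : Fintype.card (Mon m k) = Module.finrank K (Mon m k → K) := by simp
  have htop := hw.span_eq_top_of_card_eq_finrank' hcard
  refine linearIndependent_of_top_le_span_of_card_eq_finrank ?_ hcard
  rw [← htop, Submodule.span_le]
  rintro _ ⟨u, rfl⟩
  have h1 := Submodule.mem_map_of_mem (f := rest N K m k) (h u u.2)
  rw [Submodule.map_span] at h1
  refine Submodule.span_mono ?_ h1
  rintro _ ⟨_, ⟨u', hu', rfl⟩, rfl⟩
  exact ⟨⟨u', hu'⟩, rfl⟩

theorem exists_good_poly {τ : Type*} (m k : ℕ)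
    (V : Multiset ℕ → MvPolynomial (Fin N) (MvPolynomial τ K)) :
    ∃ p : MvPolynomial τ K, ∀ x : τ → K,
      eval x p ≠ 0 ↔ Good m k fun u => map (eval x) (V u) := by
  classical
  refine ⟨(Matrix.of fun u w : Mon m k => coeff (multisetToExp N w) (V u)).det, fun x => ?_⟩
  have h1 : (fun u : Mon m k => rest N K m k (map (eval x) (V u))) =
      ((eval x).mapMatrix
        (Matrix.of fun u w : Mon m k => coeff (multisetToExp N w) (V u))).row := by
    funext u w
    simp [rest_apply, coeff_map, Matrix.row]
  rw [Good, h1, Matrix.linearIndependent_rows_iff_isUnit, RingHom.map_det,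
    Matrix.isUnit_iff_isUnit_det, isUnit_iff_ne_zero]

theorem exists_eval_ne_zero [Infinite K] {τ : Type*} {p : MvPolynomial τ K} (hp : p ≠ 0) :
    ∃ x, eval x p ≠ 0 := by
  by_contra! h
  exact hp (MvPolynomial.funext fun x => by rw [h x, map_zero])

theorem sum_Mon_succ {A : Type*} [AddCommMonoid A] (m k : ℕ) (f : Multiset ℕ → A) :
    ∑ u ∈ Mon (m + 1) (k + 1), f u =
      ∑ u ∈ Mon m (k + 1), f u + ∑ u ∈ Mon (m + 1) k, f ((m + 1) ::ₘ u) := by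
  classical
  have hdis : Disjoint (Mon m (k + 1)) ((Mon (m + 1) k).image ((m + 1) ::ₘ ·)) := by
    rw [Finset.disjoint_left]
    intro u hu hu'
    obtain ⟨u', -, rfl⟩ := Finset.mem_image.1 hu'
    have := Finset.mem_Icc.1 ((mem_Mon.1 hu).1 (m + 1) (Multiset.mem_cons_self _ _))
    omega
  have hunion : Mon (m + 1) (k + 1) =
      Mon m (k + 1) ∪ (Mon (m + 1) k).image ((m + 1) ::ₘ ·) := by
    ext u
    rw [Finset.mem_union, Finset.mem_image]
    simp only [mem_Mon, Finset.mem_Icc]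
    constructor
    · rintro ⟨h1, h2⟩
      by_cases hm : m + 1 ∈ u
      · refine Or.inr ⟨u.erase (m + 1), ⟨fun x hx => h1 x (Multiset.mem_of_mem_erase hx), ?_⟩,
          Multiset.cons_erase hm⟩
        rw [Multiset.card_erase_of_mem hm, h2]; rfl
      · refine Or.inl ⟨fun x hx => ?_, h2⟩
        have := h1 x hx
        have : x ≠ m + 1 := fun h => hm (h ▸ hx)
        omega
    · rintro (⟨h1, h2⟩ | ⟨u', ⟨h1, h2⟩, rfl⟩)
      · exact ⟨fun x hx => by have := h1 x hx; omega, h2⟩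
      · refine ⟨fun x hx => ?_, by rw [Multiset.card_cons, h2]⟩
        rcases Multiset.mem_cons.1 hx with rfl | hx
        · omega
        · exact h1 x hx
  rw [hunion, Finset.sum_union hdis, Finset.sum_image fun a _ b _ h => (Multiset.cons_inj_right _).1 h]

theorem mem_Mon_succ_cons {m k : ℕ} {u : Multiset ℕ} :
    (m + 1) ::ₘ u ∈ Mon (m + 1) (k + 1) ↔ u ∈ Mon (m + 1) k := by
  simp only [mem_Mon, Multiset.card_cons, Finset.mem_Icc, Multiset.mem_cons]
  constructor
  · rintro ⟨h1, h2⟩; exact ⟨fun x hx => h1 x (Or.inr hx), by omega⟩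
  · rintro ⟨h1, h2⟩
    exact ⟨fun x hx => hx.elim (fun h => by omega) (h1 x), by omega⟩

theorem multisetToExp_cons_succ {m : ℕ} (hm : m < N) (u : Multiset ℕ) :
    multisetToExp N ((m + 1) ::ₘ u) = Finsupp.single ⟨m, hm⟩ 1 + multisetToExp N u := by
  ext a
  rw [Finsupp.add_apply, multisetToExp_apply, multisetToExp_apply, Multiset.count_cons,
    Finsupp.single_apply, add_comm]
  congr 1
  simp [Fin.ext_iff, eq_comm]

open Classical in
/-- The indicator function of a set. -/
noncomputable def eps (X : Set (Multiset ℕ)) (u : Multiset ℕ) : ℕ := if u ∈ X then 1 else 0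

/-- The family interpolating between `x_{m+1}·N(m+1,k) ∪ N(m,k+1)` (at `e = 0`) and the family
of products of linear forms. -/
noncomputable def interp {R : Type*} [CommRing R] {m : ℕ} (hm : m < N) (A : ℕ)
    (X' : Set (Multiset ℕ)) (c : ℕ → Fin N → R) (e : R) (u : Multiset ℕ) :
    MvPolynomial (Fin N) R :=
  if m + 1 ∈ u then
    (X ⟨m, hm⟩ + C (e * (eps X' u : R)) * lin c A) * pr c (sig (eps X' u) (u.erase (m + 1)))
  else pr c (sig (eps X' u) u)

theorem map_interp {R R' : Type*} [CommRing R] [CommRing R'] (f : R →+* R') {m : ℕ} (hm : m < N)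
    (A : ℕ) (X' : Set (Multiset ℕ)) (c : ℕ → Fin N → R) (e : R) (u : Multiset ℕ) :
    map f (interp hm A X' c e u) = interp hm A X' (fun a i => f (c a i)) (f e) u := by
  unfold interp
  split_ifs <;> simp [map_lin, map_pr]

theorem good_interp_zero {m k : ℕ} (hm : m < N) (A : ℕ) (X' : Set (Multiset ℕ))
    (c : ℕ → Fin N → K)
    (h1 : Good (m + 1) k fun u => pr c (sig (eps {u | (m + 1) ::ₘ u ∈ X'} u) u))
    (h2 : Good m (k + 1) fun u => pr c (sig (eps X' u) u)) :
    Good (m + 1) (k + 1) (interp hm A X' c 0) := by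
  rw [good_iff] at *
  intro a ha
  have hnot : ∀ u ∈ Mon m (k + 1), m + 1 ∉ u := fun u hu h => by
    have := Finset.mem_Icc.1 ((mem_Mon.1 hu).1 _ h); omega
  have e1 : ∀ u ∈ Mon m (k + 1), interp hm A X' c 0 u = pr c (sig (eps X' u) u) :=
    fun u hu => by rw [interp, if_neg (hnot u hu)]
  have e2 : ∀ u, interp hm A X' c 0 ((m + 1) ::ₘ u) =
      X ⟨m, hm⟩ * pr c (sig (eps {u | (m + 1) ::ₘ u ∈ X'} u) u) := fun u => by
    rw [interp, if_pos (Multiset.mem_cons_self _ _), Multiset.erase_cons_head, zero_mul, C_0,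
      zero_mul, add_zero]
    rfl
  have hA : ∀ u ∈ Mon m (k + 1), a u = 0 := by
    refine h2 a fun w hw => ?_
    have hw' : w ∈ Mon (m + 1) (k + 1) := by
      rw [mem_Mon] at *
      exact ⟨fun x hx => Finset.Icc_subset_Icc_right (Nat.le_succ m) (hw.1 x hx), hw.2⟩
    have := ha w hw'
    rw [sum_Mon_succ] at this
    rw [Finset.sum_eq_zero (s := Mon (m + 1) k), add_zero] at this
    · rw [← this]
      exact Finset.sum_congr rfl fun u hu => by rw [e1 u hu]
    · intro u _
      rw [e2, coeff_X_mul', if_neg, mul_zero]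
      rw [Finsupp.mem_support_iff, not_not, multisetToExp_apply]
      exact Multiset.count_eq_zero.2 (hnot w hw)
  have hB : ∀ u ∈ Mon (m + 1) k, a ((m + 1) ::ₘ u) = 0 := by
    refine h1 (fun u => a ((m + 1) ::ₘ u)) fun w hw => ?_
    have := ha _ (mem_Mon_succ_cons.2 hw)
    rw [sum_Mon_succ, Finset.sum_eq_zero (s := Mon m (k + 1)), zero_add] at this
    · rw [← this]
      refine Finset.sum_congr rfl fun u hu => ?_
      rw [e2, multisetToExp_cons_succ hm, coeff_X_mul]
    · intro u hu
      rw [hA u hu, zero_mul]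
  intro u hu
  by_cases hmu : m + 1 ∈ u
  · rw [← Multiset.cons_erase hmu] at hu ⊢
    exact hB _ (mem_Mon_succ_cons.1 hu)
  · refine hA u (mem_Mon.2 ⟨fun x hx => ?_, (mem_Mon.1 hu).2⟩)
    have := Finset.mem_Icc.1 ((mem_Mon.1 hu).1 x hx)
    have : x ≠ m + 1 := fun h => hmu (h ▸ hx)
    rw [Finset.mem_Icc]
    omega

theorem exists_good_interp [Infinite K] {m k : ℕ} (hm : m < N) (A : ℕ) (X' : Set (Multiset ℕ))
    (c : ℕ → Fin N → K) (h : Good (m + 1) (k + 1) (interp hm A X' c 0)) :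
    ∃ e : K, e ≠ 0 ∧ Good (m + 1) (k + 1) (interp hm A X' c e) := by
  obtain ⟨p, hp⟩ := exists_good_poly (K := K) (τ := Unit) (m + 1) (k + 1)
    (interp hm A X' (fun a i => (C (c a i) : MvPolynomial Unit K)) (X ()))
  have hp' : ∀ x : Unit → K, eval x p ≠ 0 ↔ Good (m + 1) (k + 1) (interp hm A X' c (x ())) := by
    intro x
    rw [hp]
    apply good_congr
    intro u _
    rw [map_interp]
    simp
  have h0 : p ≠ 0 := by
    rintro rfl
    exact (hp' 0).2 h (map_zero _)
  obtain ⟨x, hx⟩ := exists_eval_ne_zero (mul_ne_zero h0 (X_ne_zero (R := K) ()))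
  rw [map_mul, eval_X] at hx
  exact ⟨x (), right_ne_zero_of_mul hx, (hp' x).1 (left_ne_zero_of_mul hx)⟩

theorem lt_of_mem_sig {e b : ℕ} {u : Multiset ℕ} (hu : ∀ x ∈ u, x ≤ b) {y : ℕ}
    (hy : y ∈ sig e u) : y + 2 ≤ b + 2 * u.card + e := by
  obtain ⟨t, ht, rfl⟩ := (mem_sig (D := 0)).1 hy
  have := hu _ (qf_mem (D := 0) ht)
  omega

theorem good_step [Infinite K] {m k : ℕ} (hm : m < N) (X' : Set (Multiset ℕ))
    (hX : ∀ u, m ::ₘ u ∈ X' → (m + 1) ::ₘ u ∈ X') (c : ℕ → Fin N → K)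
    (h1 : Good (m + 1) k fun u => pr c (sig (eps {u | (m + 1) ::ₘ u ∈ X'} u) u))
    (h2 : Good m (k + 1) fun u => pr c (sig (eps X' u) u)) :
    ∃ c' : ℕ → Fin N → K, Good (m + 1) (k + 1) fun u => pr c' (sig (eps X' u) u) := by
  set A := m + 1 + 2 * k with hA
  obtain ⟨e, he, hgood⟩ := exists_good_interp hm A X' c (good_interp_zero hm A X' c h1 h2)
  set c' : ℕ → Fin N → K := fun a i =>
    if a < A then c a i else Pi.single (M := fun _ => K) ⟨m, hm⟩ 1 i + (if a = A then 0 else e * c A i)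
    with hc'
  have hlt : ∀ a < A, c' a = c a := fun a ha => by funext i; simp [hc', ha]
  have hsingle : ∑ i, C (Pi.single (M := fun _ => K) (⟨m, hm⟩ : Fin N) (1 : K) i) * X i =
      (X ⟨m, hm⟩ : MvPolynomial (Fin N) K) := by
    rw [Finset.sum_eq_single ⟨m, hm⟩]
    · simp
    · intro b _ hb; simp [Pi.single_eq_of_ne hb]
    · simp
  have hlA : lin c' A = X ⟨m, hm⟩ := by
    rw [lin, ← hsingle]
    exact Finset.sum_congr rfl fun i _ => by simp [hc']
  have hlA1 : lin c' (A + 1) = X ⟨m, hm⟩ + C e * lin c A := by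
    rw [lin, ← hsingle, lin, Finset.mul_sum, ← Finset.sum_add_distrib]
    exact Finset.sum_congr rfl fun i _ => by simp [hc', add_mul, mul_assoc]
  have heps : ∀ u, eps X' u ≤ 1 := fun u => by unfold eps; split_ifs <;> omega
  have hsame : ∀ u : Multiset ℕ, u ∈ Mon (m + 1) k → ∀ ε ≤ 1,
      pr c' (sig ε u) = pr c (sig ε u) := by
    intro u hu ε hε
    refine pr_congr fun a ha => hlt a ?_
    have := lt_of_mem_sig (fun x hx => (Finset.mem_Icc.1 ((mem_Mon.1 hu).1 x hx)).2) ha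
    rw [(mem_Mon.1 hu).2] at this
    omega
  have htop : ∀ u ∈ Mon (m + 1) k, pr c' (sig (eps X' ((m + 1) ::ₘ u)) ((m + 1) ::ₘ u)) =
      interp hm A X' c e ((m + 1) ::ₘ u) := by
    intro u hu
    rw [interp, if_pos (Multiset.mem_cons_self _ _), Multiset.erase_cons_head,
      sig_cons fun x hx => (Finset.mem_Icc.1 ((mem_Mon.1 hu).1 x hx)).2, pr_cons,
      hsame u hu _ (heps _), (mem_Mon.1 hu).2, ← hA]
    congr 1
    unfold eps
    split_ifs
    · rw [hlA1]; simp
    · rw [add_zero, hlA]; simp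
  refine ⟨c', hgood.of_span fun u hu => ?_⟩
  by_cases hmu : m + 1 ∈ u
  · rw [← Multiset.cons_erase hmu] at hu ⊢
    have hu' := mem_Mon_succ_cons.1 hu
    rw [← htop _ hu']
    exact Submodule.subset_span ⟨_, hu, rfl⟩
  · have hum : ∀ x ∈ u, x ≤ m := fun x hx => by
      have := Finset.mem_Icc.1 ((mem_Mon.1 hu).1 x hx)
      have : x ≠ m + 1 := fun h => hmu (h ▸ hx)
      omega
    have hi : interp hm A X' c e u = pr c (sig (eps X' u) u) := by rw [interp, if_neg hmu]
    rw [hi]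
    by_cases hcase : u ∈ X' ∧ m ∈ u
    · obtain ⟨huX, hmem⟩ := hcase
      obtain ⟨u', rfl⟩ := Multiset.exists_cons_of_mem hmem
      have hu'm : ∀ x ∈ u', x ≤ m := fun x hx => hum x (Multiset.mem_cons_of_mem hx)
      have hu' : u' ∈ Mon (m + 1) k := by
        rw [mem_Mon] at hu ⊢
        refine ⟨fun x hx => hu.1 x (Multiset.mem_cons_of_mem hx), ?_⟩
        have := hu.2
        rw [Multiset.card_cons] at this
        omega
      have hv1 : pr c' (sig (eps X' (m ::ₘ u')) (m ::ₘ u')) = X ⟨m, hm⟩ * pr c (sig 1 u') := by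
        rw [eps, if_pos huX, sig_cons hu'm, pr_cons, hsame u' hu' 1 le_rfl, (mem_Mon.1 hu').2,
          show m + 2 * k + 1 = A by omega, hlA]
      have hv2 := htop u' hu'
      rw [interp, if_pos (Multiset.mem_cons_self _ _), Multiset.erase_cons_head] at hv2
      have hw1 : pr c (sig (eps X' (m ::ₘ u')) (m ::ₘ u')) = lin c A * pr c (sig 1 u') := by
        rw [eps, if_pos huX, sig_cons hu'm, pr_cons, (mem_Mon.1 hu').2,
          show m + 2 * k + 1 = A by omega]
      have heps1 : eps X' ((m + 1) ::ₘ u') = 1 := by rw [eps, if_pos (hX u' huX)]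
      have : pr c (sig (eps X' (m ::ₘ u')) (m ::ₘ u')) =
          e⁻¹ • (pr c' (sig (eps X' ((m + 1) ::ₘ u')) ((m + 1) ::ₘ u')) -
            pr c' (sig (eps X' (m ::ₘ u')) (m ::ₘ u'))) := by
        rw [hv2, hv1, hw1, heps1, Nat.cast_one, mul_one, add_mul, add_sub_cancel_left, smul_eq_C_mul,
          ← mul_assoc, ← mul_assoc, ← C_mul, inv_mul_cancel₀ he, C_1, one_mul]
      rw [this]
      refine Submodule.smul_mem _ _ (Submodule.sub_mem _ ?_ ?_)
      · exact Submodule.subset_span ⟨_, mem_Mon_succ_cons.2 hu', rfl⟩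
      · exact Submodule.subset_span ⟨_, hu, rfl⟩
    · have : pr c (sig (eps X' u) u) = pr c' (sig (eps X' u) u) := by
        refine (pr_congr fun a ha => hlt a ?_).symm
        have hcard := (mem_Mon.1 hu).2
        by_cases huX : u ∈ X'
        · have h3 := lt_of_mem_sig (b := m - 1) (fun x hx => by
            have := hum x hx
            have : x ≠ m := fun h => hcase ⟨huX, h ▸ hx⟩
            omega) ha
          have h4 := (mem_Mon.1 hu).1
          have : m ≠ 0 := by
            rintro rfl
            obtain ⟨x, hx⟩ := Multiset.exists_mem_of_ne_zero (s := u) (by rintro rfl; simp at hcard)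
            have := hum x hx
            have := Finset.mem_Icc.1 (h4 x hx)
            omega
          rw [hcard, eps, if_pos huX] at h3
          omega
        · have h3 := lt_of_mem_sig hum ha
          rw [hcard, eps, if_neg huX] at h3
          omega
      rw [this]
      exact Submodule.subset_span ⟨u, hu, rfl⟩

theorem exists_good_open (m k : ℕ) (X' : Set (Multiset ℕ)) {c : ℕ → Fin N → K}
    (h : Good m k fun u => pr c (sig (eps X' u) u)) :
    ∃ p : MvPolynomial (ℕ × Fin N) K, p ≠ 0 ∧ ∀ x, eval x p ≠ 0 →
      Good m k fun u => pr (fun a i => x (a, i)) (sig (eps X' u) u) := by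
  obtain ⟨p, hp⟩ := exists_good_poly (K := K) m k fun u =>
    pr (fun a i => (X (a, i) : MvPolynomial (ℕ × Fin N) K)) (sig (eps X' u) u)
  have hp' : ∀ x, eval x p ≠ 0 ↔
      Good m k fun u => pr (fun a i => x (a, i)) (sig (eps X' u) u) := by
    intro x
    rw [hp]
    apply good_congr
    intro u _
    rw [map_pr]
    simp
  refine ⟨p, ?_, fun x => (hp' x).1⟩
  rintro rfl
  exact (hp' fun y => c y.1 y.2).2 h (map_zero _)

theorem exists_good [Infinite K] (M : ℕ) (m : ℕ) (hmN : m ≤ N) (hmM : m ≤ M) (k : ℕ)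
    (X' : Set (Multiset ℕ))
    (hX : ∀ u i j, i < j → j ≤ M → i ::ₘ u ∈ X' → j ::ₘ u ∈ X') :
    ∃ c : ℕ → Fin N → K, Good m k fun u => pr c (sig (eps X' u) u) := by
  induction m generalizing k X' with
  | zero =>
    cases k with
    | zero =>
      refine ⟨0, good_iff.2 fun a ha u hu => ?_⟩
      have h0 : Mon 0 0 = {0} := by
        ext u; simp only [mem_Mon, Multiset.card_eq_zero, Finset.mem_singleton]
        exact ⟨fun h => h.2, fun h => ⟨by simp [h], h⟩⟩
      have := ha 0 (by rw [h0]; simp)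
      rw [h0, Finset.sum_singleton] at this
      rw [h0, Finset.mem_singleton] at hu
      have hz : multisetToExp N 0 = 0 := by ext; simp [multisetToExp_apply]
      subst hu
      simpa [pr, sig, hz] using this
    | succ k =>
      refine ⟨0, good_iff.2 fun a _ u hu => ?_⟩
      obtain ⟨x, hx⟩ := Multiset.exists_mem_of_ne_zero (s := u)
        (by rintro rfl; simpa using (mem_Mon.1 hu).2)
      have := (mem_Mon.1 hu).1 x hx
      simp at this
  | succ m ihm =>
    induction k generalizing X' with
    | zero =>
      refine ⟨0, good_iff.2 fun a ha u hu => ?_⟩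
      have h0 : Mon (m + 1) 0 = {0} := by
        ext u; simp only [mem_Mon, Multiset.card_eq_zero, Finset.mem_singleton]
        exact ⟨fun h => h.2, fun h => ⟨by simp [h], h⟩⟩
      have := ha 0 (by rw [h0]; simp)
      rw [h0, Finset.sum_singleton] at this
      rw [h0, Finset.mem_singleton] at hu
      have hz : multisetToExp N 0 = 0 := by ext; simp [multisetToExp_apply]
      subst hu
      simpa [pr, sig, hz] using this
    | succ k ihk =>
      obtain ⟨c₁, h₁⟩ := ihk {u | (m + 1) ::ₘ u ∈ X'} fun u i j hij hj h => by
        rw [Set.mem_ofPred_eq, Multiset.cons_swap] at h ⊢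
        exact hX _ i j hij hj h
      obtain ⟨c₂, h₂⟩ := ihm (by omega) (by omega) (k + 1) X' hX
      obtain ⟨p₁, hp₁, hx₁⟩ := exists_good_open _ _ _ h₁
      obtain ⟨p₂, hp₂, hx₂⟩ := exists_good_open _ _ _ h₂
      obtain ⟨x, hx⟩ := exists_eval_ne_zero (mul_ne_zero hp₁ hp₂)
      rw [map_mul] at hx
      exact good_step (by omega) X' (fun u h => hX u m (m + 1) (by omega) hmM h) _
        (hx₁ x (left_ne_zero_of_mul hx)) (hx₂ x (right_ne_zero_of_mul hx))

end Good

section ChangeOfCoordinates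

variable {N : ℕ} {K : Type*} [Field K]

/-- The monomial `x^w`. -/
noncomputable def mon (N : ℕ) (K : Type*) [Field K] (w : Multiset ℕ) : MvPolynomial (Fin N) K :=
  monomial (multisetToExp N w) 1

theorem multisetToExp_zero : multisetToExp N 0 = 0 := by
  ext; simp [multisetToExp_apply]

theorem multisetToExp_cons {a : ℕ} (ha : a ∈ Finset.Icc 1 N) (w : Multiset ℕ) :
    multisetToExp N (a ::ₘ w) =
      Finsupp.single ⟨a - 1, by rw [Finset.mem_Icc] at ha; omega⟩ 1 + multisetToExp N w := by
  rw [Finset.mem_Icc] at ha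
  ext b
  rw [Finsupp.add_apply, multisetToExp_apply, multisetToExp_apply, Multiset.count_cons,
    Finsupp.single_apply, add_comm]
  congr 1
  simp only [Fin.ext_iff]
  congr 1
  apply propext
  omega

theorem mon_zero : mon N K 0 = 1 := by
  rw [mon, multisetToExp_zero]; rfl

theorem mon_cons {a : ℕ} (ha : a ∈ Finset.Icc 1 N) (w : Multiset ℕ) :
    mon N K (a ::ₘ w) = X ⟨a - 1, by rw [Finset.mem_Icc] at ha; omega⟩ * mon N K w := by
  rw [mon, multisetToExp_cons ha, mon, X, monomial_mul, one_mul]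

/-- The coefficients of the linear forms that are the images of the variables under `genLin M`. -/
def cols {R : Type*} [Zero R] (M : Matrix (Fin N) (Fin N) R) (a : ℕ) (i : Fin N) : R :=
  if h : a - 1 < N then M i ⟨a - 1, h⟩ else 0

theorem genLin_mon (M : Matrix (Fin N) (Fin N) K) {w : Multiset ℕ}
    (hw : ∀ x ∈ w, x ∈ Finset.Icc 1 N) : genLin M (mon N K w) = pr (cols M) w := by
  induction w using Multiset.induction with
  | empty => simp [mon_zero, pr]
  | cons a w ih =>
    have ha := hw a (Multiset.mem_cons_self _ _)
    rw [mon_cons ha, map_mul, ih fun x hx => hw x (Multiset.mem_cons_of_mem hx), pr_cons]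
    congr 1
    rw [Finset.mem_Icc] at ha
    rw [genLin, aeval_X, lin]
    exact Finset.sum_congr rfl fun i _ => by rw [cols, dif_pos]

theorem isHomogeneous_genLin (M : Matrix (Fin N) (Fin N) K) {f : MvPolynomial (Fin N) K} {k : ℕ}
    (hf : f.IsHomogeneous k) : (genLin M f).IsHomogeneous k := by
  have := hf.aeval (fun j => ∑ a : Fin N, C (M a j) * X a) (n := 1) fun j =>
    IsHomogeneous.sum _ _ _ fun i _ => isHomogeneous_C_mul_X _ _
  rwa [one_mul] at this

theorem genLin_homogeneousComponent (M : Matrix (Fin N) (Fin N) K) (k : ℕ)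
    (f : MvPolynomial (Fin N) K) :
    genLin M (homogeneousComponent k f) = homogeneousComponent k (genLin M f) := by
  induction f using MvPolynomial.induction_on' with
  | monomial e a =>
    have h : (monomial e a).IsHomogeneous e.degree := isHomogeneous_monomial a rfl
    rw [homogeneousComponent_of_mem h, homogeneousComponent_of_mem (isHomogeneous_genLin M h)]
    split_ifs <;> simp
  | add p q hp hq => rw [map_add, map_add, map_add, map_add, hp, hq]

theorem genLin_genLin (A B : Matrix (Fin N) (Fin N) K) (f : MvPolynomial (Fin N) K) :
    genLin A (genLin B f) = genLin (A * B) f := by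
  have : (genLin A).comp (genLin B) = genLin (A * B) := by
    ext1 j
    simp only [genLin, AlgHom.comp_apply, aeval_X, map_sum, map_mul, Matrix.mul_apply,
      Finset.sum_mul, Finset.mul_sum, algHom_C, algebraMap_eq]
    rw [Finset.sum_comm]
    refine Finset.sum_congr rfl fun a _ => Finset.sum_congr rfl fun b _ => ?_
    ring
  rw [← this]; rfl

theorem genLin_one (f : MvPolynomial (Fin N) K) : genLin 1 f = f := by
  have : genLin (1 : Matrix (Fin N) (Fin N) K) = AlgHom.id K _ := by
    ext1 j
    rw [genLin, aeval_X, Finset.sum_eq_single j]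
    · simp
    · intro b _ hb; simp [Matrix.one_apply_ne hb]
    · simp
  rw [this]; rfl

theorem genLin_surjective {M : Matrix (Fin N) (Fin N) K} (hM : IsUnit M.det) :
    Function.Surjective (genLin M) := fun f =>
  ⟨genLin M⁻¹ f, by rw [genLin_genLin, Matrix.mul_nonsing_inv _ hM, genLin_one]⟩

theorem faceMonomial_eq_mon (F : Finset ℕ) : faceMonomial K N F = mon N K F.val := by
  rw [faceMonomial, mon]
  have : multisetToExp N F.val =
      ∑ a ∈ Finset.univ.filter (fun a : Fin N => (a : ℕ) + 1 ∈ F), Finsupp.single a 1 := by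
    ext b
    rw [multisetToExp_apply, Finsupp.finsetSum_apply]
    simp [Finsupp.single_apply, Multiset.count_eq_of_nodup F.nodup]
  rw [this, monomial_sum_one]
  rfl

theorem toFinset_subset_of_exp_le {F : Finset ℕ} (hF : F ⊆ Finset.Icc 1 N) {e : Fin N →₀ ℕ}
    (h : multisetToExp N F.val ≤ e) : F ⊆ (unexp e).toFinset := by
  intro x hx
  have hx' := Finset.mem_Icc.1 (hF hx)
  have h1 := h ⟨x - 1, by omega⟩
  rw [← multisetToExp_unexp e, multisetToExp_apply, multisetToExp_apply] at h1
  simp only [Nat.sub_add_cancel hx'.1] at h1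
  rw [Multiset.mem_toFinset, ← Multiset.one_le_count_iff_mem]
  exact (Multiset.one_le_count_iff_mem.2 hx).trans h1

theorem notMem_of_mem_srIdeal {Γ : Set (Finset ℕ)} (hΓ : ∀ F ∈ Γ, ∀ G ⊆ F, G ∈ Γ)
    {f : MvPolynomial (Fin N) K} (hf : f ∈ srIdeal K N Γ) {e : Fin N →₀ ℕ} (he : e ∈ f.support) :
    (unexp e).toFinset ∉ Γ := by
  have hset : {f | ∃ F : Finset ℕ, F ⊆ Finset.Icc 1 N ∧ F ∉ Γ ∧ f = faceMonomial K N F} =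
      (fun s => monomial s (1 : K)) ''
        {s | ∃ F : Finset ℕ, F ⊆ Finset.Icc 1 N ∧ F ∉ Γ ∧ s = multisetToExp N F.val} := by
    ext f
    constructor
    · rintro ⟨F, h1, h2, rfl⟩
      exact ⟨_, ⟨F, h1, h2, rfl⟩, (faceMonomial_eq_mon F).symm⟩
    · rintro ⟨_, ⟨F, h1, h2, rfl⟩, rfl⟩
      exact ⟨F, h1, h2, (faceMonomial_eq_mon F).symm⟩
  rw [srIdeal, hset, mem_ideal_span_monomial_image] at hf
  obtain ⟨_, ⟨F, h1, h2, rfl⟩, hle⟩ := hf e he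
  exact fun h => h2 (hΓ _ h _ (toFinset_subset_of_exp_le h1 hle))

theorem mon_mem_srIdeal {Γ : Set (Finset ℕ)} {w : Multiset ℕ}
    (hw : ∀ x ∈ w, x ∈ Finset.Icc 1 N) (h : w.toFinset ∉ Γ) : mon N K w ∈ srIdeal K N Γ := by
  have h1 : faceMonomial K N w.toFinset ∈ srIdeal K N Γ :=
    Ideal.subset_span ⟨_, fun x hx => hw x (Multiset.mem_toFinset.1 hx), h, rfl⟩
  rw [faceMonomial_eq_mon] at h1
  have h2 : mon N K w = mon N K (w - w.toFinset.val) * mon N K w.toFinset.val := by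
    rw [mon, mon, mon, monomial_mul, one_mul, ← multisetToExp_add, tsub_add_cancel_of_le]
    exact Multiset.dedup_le w
  rw [h2]
  exact Ideal.mul_mem_left _ _ h1

/-- The span of the images of the monomials in `S` under a change of coordinates. -/
noncomputable def monSpan (M : Matrix (Fin N) (Fin N) K) (S : Set (Multiset ℕ)) :
    Submodule K (MvPolynomial (Fin N) K) :=
  Submodule.span K ((fun w => genLin M (mon N K w)) '' S)

theorem mem_map_of_mem_monSpan {M : Matrix (Fin N) (Fin N) K} {S : Set (Multiset ℕ)}
    {Γ : Set (Finset ℕ)} (hS : ∀ w ∈ S, (∀ x ∈ w, x ∈ Finset.Icc 1 N) ∧ w.toFinset ∉ Γ)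
    {f : MvPolynomial (Fin N) K} (hf : f ∈ monSpan M S) :
    f ∈ Ideal.map (genLin M) (srIdeal K N Γ) := by
  have : monSpan M S ≤ (Ideal.map (genLin M) (srIdeal K N Γ)).restrictScalars K := by
    rw [monSpan, Submodule.span_le]
    rintro _ ⟨w, hw, rfl⟩
    exact Ideal.mem_map_of_mem _ (mon_mem_srIdeal (hS w hw).1 (hS w hw).2)
  exact this hf

theorem isHomogeneous_of_mem_monSpan {M : Matrix (Fin N) (Fin N) K} {S : Set (Multiset ℕ)} {k : ℕ}
    (hS : ∀ w ∈ S, w ∈ Mon N k) {f : MvPolynomial (Fin N) K} (hf : f ∈ monSpan M S) :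
    f.IsHomogeneous k := by
  have : monSpan M S ≤ homogeneousSubmodule (Fin N) K k := by
    rw [monSpan, Submodule.span_le]
    rintro _ ⟨w, hw, rfl⟩
    have hw := mem_Mon.1 (hS w hw)
    refine isHomogeneous_genLin M (isHomogeneous_monomial _ ?_)
    rw [degree_multisetToExp hw.1, hw.2]
  exact this hf

theorem exists_monSpan_lead {M : Matrix (Fin N) (Fin N) K} (hM : IsUnit M.det)
    {Γ : Set (Finset ℕ)} (hΓ : ∀ F ∈ Γ, ∀ G ⊆ F, G ∈ Γ) {f : MvPolynomial (Fin N) K}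
    (hf : f ∈ Ideal.map (genLin M) (srIdeal K N Γ)) {u : Fin N →₀ ℕ} (hu : IsLead f u) :
    ∃ g ∈ monSpan M {w | w ∈ Mon N u.degree ∧ w.toFinset ∉ Γ}, IsLead g u := by
  obtain ⟨h, hh, rfl⟩ := (Ideal.mem_map_iff_of_surjective (genLin M) (genLin_surjective hM)).1 hf
  refine ⟨genLin M (homogeneousComponent u.degree h), ?_, ?_⟩
  · rw [homogeneousComponent_apply, map_sum]
    refine Submodule.sum_mem _ fun e he => ?_
    rw [Finset.mem_filter] at he
    have : monomial e (coeff e h) = coeff e h • mon N K (unexp e) := by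
      rw [mon, multisetToExp_unexp, smul_monomial, smul_eq_mul, mul_one]
    rw [this, map_smul]
    refine Submodule.smul_mem _ _ (Submodule.subset_span ⟨_, ⟨mem_Mon.2 ⟨mem_unexp e, ?_⟩,
      notMem_of_mem_srIdeal hΓ hh he.1⟩, rfl⟩)
    rw [← degree_multisetToExp (mem_unexp e), multisetToExp_unexp, he.2]
  · rw [genLin_homogeneousComponent]
    constructor
    · rw [support_homogeneousComponent, Finset.mem_filter]
      exact ⟨hu.1, rfl⟩
    · intro v hv
      rw [support_homogeneousComponent, Finset.mem_filter] at hv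
      exact hu.2 v hv.1

theorem exists_lead_of_le {I : Ideal (MvPolynomial (Fin N) K)} {v w : Multiset ℕ} (hvw : v ≤ w)
    (h : ∃ f ∈ I, IsLead f (multisetToExp N v)) : ∃ f ∈ I, IsLead f (multisetToExp N w) := by
  obtain ⟨f, hf, hl⟩ := h
  have h := hl.monomial_mul (multisetToExp N (w - v))
  rw [← multisetToExp_add, tsub_add_cancel_of_le hvw] at h
  exact ⟨_, I.mul_mem_left _ hf, h⟩

theorem unexp_mem_Mon {f : MvPolynomial (Fin N) K} {k : ℕ} (hf : f.IsHomogeneous k)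
    {e : Fin N →₀ ℕ} (he : e ∈ f.support) : unexp e ∈ Mon N k := by
  refine mem_Mon.2 ⟨mem_unexp e, ?_⟩
  rw [← degree_multisetToExp (mem_unexp e), multisetToExp_unexp]
  by_contra hne
  exact mem_support_iff.1 he (hf.coeff_eq_zero hne)

end ChangeOfCoordinates

section Leads

variable {m d : ℕ} {K : Type*} [Field K]

theorem Mon_mono {N N' k : ℕ} (h : N ≤ N') {u : Multiset ℕ} (hu : u ∈ Mon N k) : u ∈ Mon N' k :=
  mem_Mon.2 ⟨fun x hx => Finset.Icc_subset_Icc_right h ((mem_Mon.1 hu).1 x hx), (mem_Mon.1 hu).2⟩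

theorem ballq_down {U : Set (Multiset ℕ)} : ∀ F ∈ ballq m d U, ∀ G ⊆ F, G ∈ ballq m d U := by
  rintro F ⟨u, hu, hF⟩ G hG
  exact ⟨u, hu, hG.trans hF⟩

/-- The ideal `φ(I_B)`, for `B` a squeezed ball. -/
noncomputable abbrev ballIdeal (M : Matrix (Fin (m + d + 1)) (Fin (m + d + 1)) K)
    (U : Set (Multiset ℕ)) : Ideal (MvPolynomial (Fin (m + d + 1)) K) :=
  Ideal.map (genLin M) (srIdeal K (m + d + 1) (ballq m d U))

/-- `x^u` is a leading monomial of an element of `W`. -/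
def HasLead {N : ℕ} {S : Type*} [SetLike S (MvPolynomial (Fin N) K)] (W : S) (u : Multiset ℕ) : Prop :=
  ∃ f ∈ W, IsLead f (multisetToExp N u)

theorem filter_notMem_of_hasLead {M : Matrix (Fin (m + d + 1)) (Fin (m + d + 1)) K}
    (hM : IsUnit M.det) {k : ℕ} (hk : k ≤ d / 2 + 1) {U : Set (Multiset ℕ)}
    (hyp : ∀ v, (∀ x ∈ v, x ∈ Finset.Icc 1 m) → v.card ≤ k → v ∉ U →
      HasLead (ballIdeal (d := d) M U) v)
    {v : Multiset ℕ} (hv : v ∈ Mon (m + d + 1) k) (hl : HasLead (ballIdeal (d := d) M U) v) :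
    v.filter (· ≤ m) ∉ U := by
  classical
  intro hvU
  set W := monSpan M (badMon m d k U : Set (Multiset ℕ)) with hW
  have hfin : Module.Finite K W := by
    rw [hW, monSpan, ← Finset.coe_image]
    exact Module.Finite.span_finset K _
  have hlead : ∀ w ∈ Mon (m + d + 1) k, HasLead (ballIdeal (d := d) M U) w →
      ∃ g ∈ W, IsLead g (multisetToExp (m + d + 1) w) := by
    rintro w hw ⟨f, hf, hfl⟩
    obtain ⟨g, hg, hgl⟩ := exists_monSpan_lead hM ballq_down hf hfl
    refine ⟨g, ?_, hgl⟩
    rw [degree_multisetToExp (mem_Mon.1 hw).1, (mem_Mon.1 hw).2] at hg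
    convert hg using 2
    ext w
    simp [mem_badMon]
  have hstd : v ∉ stdBad m d k U := fun h => (mem_stdBad.1 h).2 hvU
  have hsub : ∀ w ∈ insert v (stdBad m d k U), w ∈ Mon (m + d + 1) k := by
    intro w hw
    rcases Finset.mem_insert.1 hw with rfl | hw
    · exact hv
    · exact (mem_stdBad.1 hw).1
  have h1 := card_le_finrank_of_leads (W := W)
    ((insert v (stdBad m d k U)).image (multisetToExp (m + d + 1))) (by
      intro e he
      obtain ⟨w, hw, rfl⟩ := Finset.mem_image.1 he
      refine hlead w (hsub w hw) ?_
      rcases Finset.mem_insert.1 hw with rfl | hw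
      · exact hl
      · rw [mem_stdBad, mem_Mon] at hw
        refine exists_lead_of_le (Multiset.filter_le (· ≤ m) w) (hyp _ ?_ ?_ hw.2)
        · intro x hx
          rw [Multiset.mem_filter] at hx
          exact Finset.mem_Icc.2 ⟨(Finset.mem_Icc.1 (hw.1.1 x hx.1)).1, hx.2⟩
        · exact (Multiset.card_le_card (Multiset.filter_le _ _)).trans hw.1.2.le)
  rw [Finset.card_image_of_injOn fun a ha b hb h =>
    multisetToExp_inj (mem_Mon.1 (hsub a ha)).1 (mem_Mon.1 (hsub b hb)).1 h,
    Finset.card_insert_of_notMem hstd] at h1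
  have h2 : Module.finrank K W ≤ (badMon m d k U).card := by
    rw [hW, monSpan, ← Finset.coe_image]
    exact (finrank_span_finset_le_card _).trans Finset.card_image_le
  have := card_badMon_le (m := m) hk U
  omega

/-- The monomials of the same degree as `u` dominating `u` in the count order. -/
def dom (m : ℕ) (u : Multiset ℕ) : Set (Multiset ℕ) :=
  {v | v ∈ Mon m u.card ∧ ∀ c ≤ m, cnt c u ≤ cnt c v}

theorem ShiftClosed.notMem_of_mem_dom {U : Set (Multiset ℕ)} (hU : ShiftClosed m U)
    {u v : Multiset ℕ} (hu : u ∈ Mon m u.card) (huU : u ∉ U) (hv : v ∈ dom m u) : v ∉ U := by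
  intro hvU
  refine huU (hU.mem_of_qf_le hvU (fun x hx => (Finset.mem_Icc.1 ((mem_Mon.1 hu).1 x hx)).2)
    fun t ht => ?_)
  have h1 := (Finset.mem_Icc.1 ((mem_Mon.1 hu).1 _ (qf_mem (D := m + 1) ht))).2
  rw [qf_le_iff (by omega)]
  exact ((qf_le_iff (by omega) u t).1 le_rfl).trans_le (hv.2 _ h1)

theorem sig_mem_Icc {e k : ℕ} (he : e ≤ 1) (hk : k ≤ d / 2 + 1) {v : Multiset ℕ}
    (hv : v ∈ Mon m k) : ∀ x ∈ sig e v, x ∈ Finset.Icc 1 (m + d + 1) := by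
  intro x hx
  rw [mem_Mon] at hv
  have h1 := lt_of_mem_sig (fun y hy => (Finset.mem_Icc.1 (hv.1 y hy)).2) hx
  obtain ⟨t, ht, rfl⟩ := (mem_sig (D := 0)).1 hx
  have := Finset.mem_Icc.1 (hv.1 _ (qf_mem (D := 0) ht))
  rw [Finset.mem_Icc]
  omega

theorem sig_mem_Mon {e k : ℕ} (he : e ≤ 1) (hk : k ≤ d / 2 + 1) {v : Multiset ℕ}
    (hv : v ∈ Mon m k) : sig e v ∈ Mon (m + d + 1) k :=
  mem_Mon.2 ⟨sig_mem_Icc he hk hv, by rw [card_sig, (mem_Mon.1 hv).2]⟩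

theorem hasLead_ballIdeal_of_dom {M : Matrix (Fin (m + d + 1)) (Fin (m + d + 1)) K}
    {U : Set (Multiset ℕ)} (hU : ShiftClosed m U) {k : ℕ} (hk : k ≤ d / 2 + 1) {u : Multiset ℕ}
    (hu : u ∈ Mon m k) (huU : u ∉ U) (h : HasLead (monSpan (N := m + d + 1) M (sig 0 '' dom m u)) u) :
    HasLead (ballIdeal (d := d) M U) u := by
  obtain ⟨f, hf, hl⟩ := h
  refine ⟨f, mem_map_of_mem_monSpan ?_ hf, hl⟩
  rintro _ ⟨v, hv, rfl⟩
  have hu' := hu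
  rw [← (mem_Mon.1 hu).2] at hu'
  have hvm := hv.1
  rw [(mem_Mon.1 hu).2] at hvm
  exact ⟨sig_mem_Icc zero_le_one hk hvm, fun hb => hU.notMem_of_mem_dom hu' huU hv
    (hU.mem_of_sig_mem_ballq (fun x hx => (Finset.mem_Icc.1 ((mem_Mon.1 hvm).1 x hx)).2) hb)⟩

theorem Good.exists_mem_support {N k : ℕ} {V : Multiset ℕ → MvPolynomial (Fin N) K}
    (hV : Good m k V) {f : MvPolynomial (Fin N) K}
    (hf : f ∈ Submodule.span K (V '' (Mon m k : Set (Multiset ℕ)))) (hf0 : f ≠ 0) :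
    ∃ w ∈ Mon m k, multisetToExp N w ∈ f.support := by
  classical
  obtain ⟨a, rfl⟩ := (Submodule.mem_span_image_finset_iff_exists_fun K).1 hf
  by_contra! hcon
  refine hf0 (Finset.sum_eq_zero fun u hu => ?_)
  rw [Fintype.linearIndependent_iff.1 hV a (funext fun w => ?_) u, zero_smul]
  have := hcon w w.2
  rw [notMem_support_iff, coeff_sum] at this
  simpa [rest_apply] using this

theorem Good.card_le_finrank {N k : ℕ} {V : Multiset ℕ → MvPolynomial (Fin N) K}
    (hV : Good m k V) (S : Finset (Multiset ℕ)) (hS : S ⊆ Mon m k) :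
    S.card ≤ Module.finrank K (Submodule.span K (V '' (S : Set (Multiset ℕ)))) := by
  classical
  have h1 : LinearIndependent K fun u : Mon m k => V u :=
    LinearIndependent.of_comp (rest N K m k) hV
  have h2 : LinearIndependent K fun u : S => V u :=
    h1.comp (fun u : S => (⟨u, hS u.2⟩ : Mon m k)) fun a b h =>
      Subtype.ext (congrArg (fun x : Mon m k => (x : Multiset ℕ)) h)
  have h3 := finrank_span_eq_card h2
  rw [Fintype.card_coe] at h3
  rw [← h3]
  refine le_of_eq ?_
  rw [Set.image_eq_range]
  rfl

theorem exists_le_card_eq {u v : Multiset ℕ} (hv : ∀ x ∈ v, x ∈ Finset.Icc 1 m)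
    (h : ∀ c ≤ m, cnt c u ≤ cnt c v) (hcard : u.card ≤ v.card) :
    ∃ v₀ ≤ v, v₀.card = u.card ∧ ∀ c ≤ m, cnt c u ≤ cnt c v₀ := by
  induction v using max_induction with
  | h0 => exact ⟨0, le_rfl, by simpa [eq_comm] using hcard, h⟩
  | hs b w hb ih =>
    by_cases heq : u.card = (b ::ₘ w).card
    · exact ⟨_, le_rfl, heq.symm, h⟩
    · rw [Multiset.card_cons] at heq hcard
      have hw : ∀ c ≤ m, cnt c u ≤ cnt c w := by
        intro c hc
        have h3 := h c hc
        rw [cnt_cons] at h3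
        split_ifs at h3 with hbc
        · rw [cnt_eq_card fun x hx => (hb x hx).trans hbc]
          exact (cnt_le_card c u).trans (by omega)
        · exact h3
      obtain ⟨v₀, h1, h2⟩ := ih (fun x hx => hv x (Multiset.mem_cons_of_mem hx)) hw (by omega)
      exact ⟨v₀, h1.trans (Multiset.le_cons_self _ _), h2⟩

theorem shiftClosed_cnt (w : Multiset ℕ) :
    ShiftClosed m {v | (∀ x ∈ v, x ∈ Finset.Icc 1 m) ∧ ∃ c ≤ m, cnt c v < cnt c w} where
  le_of_mem u hu x hx := (Finset.mem_Icc.1 (hu.1 x hx)).2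
  down u hu v hvu := ⟨fun x hx => hu.1 x (Multiset.mem_of_le hvu hx),
    hu.2.imp fun c hc => ⟨hc.1, (cnt_mono hvu).trans_lt hc.2⟩⟩
  shift u i j hij hj hu := by
    obtain ⟨h1, c, hc, hlt⟩ := hu
    refine ⟨fun x hx => ?_, c, hc, ?_⟩
    · rcases Multiset.mem_cons.1 hx with rfl | hx
      · rw [Finset.mem_Icc]; omega
      · exact h1 x (Multiset.mem_cons_of_mem hx)
    · rw [cnt_cons] at hlt ⊢
      split_ifs at hlt ⊢ <;> omega

theorem hasLead_dom {M : Matrix (Fin (m + d + 1)) (Fin (m + d + 1)) K} (hM : IsUnit M.det)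
    (hG : ∀ c ≤ m, ∀ k ≤ d / 2 + 1,
      Good c k fun u => genLin M (mon (m + d + 1) K (sig 0 u)))
    (k : ℕ) (hk : k ≤ d / 2 + 1) (u : Multiset ℕ) (hu : u ∈ Mon m k) :
    HasLead (monSpan (N := m + d + 1) M (sig 0 '' dom m u)) u := by
  classical
  induction k generalizing u with
  | zero =>
    have hu0 : u = 0 := Multiset.card_eq_zero.1 (mem_Mon.1 hu).2
    subst hu0
    refine ⟨1, Submodule.subset_span ⟨0, ⟨0, ⟨hu, fun _ _ => le_rfl⟩, rfl⟩, ?_⟩, ?_⟩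
    · simp [mon_zero]
    · rw [multisetToExp_zero]
      refine ⟨by simp, fun v hv hne => absurd ?_ hne⟩
      simpa [coeff_one, eq_comm] using hv
  | succ k ih =>
    cases u using max_induction with
    | h0 => simp [mem_Mon] at hu
    | hs b w hb _ =>
    obtain ⟨hum, hucard⟩ := mem_Mon.1 hu
    rw [Multiset.card_cons] at hucard
    have hb1 := Finset.mem_Icc.1 (hum b (Multiset.mem_cons_self _ _))
    set U' := {v : Multiset ℕ | (∀ x ∈ v, x ∈ Finset.Icc 1 m) ∧ ∃ c ≤ m, cnt c v < cnt c w} with hU'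
    have hU'c : ShiftClosed m U' := shiftClosed_cnt w
    have hnot : ∀ v, (∀ x ∈ v, x ∈ Finset.Icc 1 m) → (v ∉ U' ↔ ∀ c ≤ m, cnt c w ≤ cnt c v) := by
      intro v hv
      simp only [hU', Set.mem_ofPred_eq, not_and, not_exists, not_lt]
      exact ⟨fun h => h hv, fun h _ => h⟩
    have hyp : ∀ v, (∀ x ∈ v, x ∈ Finset.Icc 1 m) → v.card ≤ k + 1 → v ∉ U' →
        HasLead (ballIdeal (d := d) M U') v := by
      intro v hv _ hvU
      rw [hnot v hv] at hvU
      have hcard := hvU m le_rfl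
      rw [cnt_eq_card fun x hx => (Finset.mem_Icc.1 (hv x hx)).2,
        cnt_eq_card fun x hx => (Finset.mem_Icc.1 (hum x (Multiset.mem_cons_of_mem hx))).2] at hcard
      obtain ⟨v₀, h1, h2, h3⟩ := exists_le_card_eq hv hvU hcard
      have h4 : ∀ x ∈ v₀, x ∈ Finset.Icc 1 m := fun x hx => hv x (Multiset.mem_of_le h1 hx)
      have h5 : v₀ ∈ Mon m k := mem_Mon.2 ⟨h4, by omega⟩
      exact exists_lead_of_le h1 (hasLead_ballIdeal_of_dom hU'c (by omega) h5 ((hnot _ h4).2 h3)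
        (ih (by omega) v₀ h5))
    set D := (Mon m (k + 1)).filter fun v => ∀ c ≤ m, cnt c (b ::ₘ w) ≤ cnt c v with hD
    have hdom : dom m (b ::ₘ w) = (D : Set (Multiset ℕ)) := by
      ext v
      simp only [dom, Multiset.card_cons, hucard, hD, Finset.coe_filter]
    set V : Multiset ℕ → MvPolynomial (Fin (m + d + 1)) K :=
      fun v => genLin M (mon (m + d + 1) K (sig 0 v)) with hV
    have hspan : monSpan M (sig 0 '' dom m (b ::ₘ w)) =
        Submodule.span K (V '' (D : Set (Multiset ℕ))) := by
      rw [monSpan, Set.image_image, hdom]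
    have hcntw : ∀ c, cnt c w ≤ cnt c (b ::ₘ w) := fun c => cnt_mono (Multiset.le_cons_self _ _)
    have hDb : D ⊆ Mon b (k + 1) := by
      intro v hv
      obtain ⟨hv1, hv2⟩ := Finset.mem_filter.1 hv
      rw [mem_Mon] at hv1 ⊢
      have h1 := hv2 b hb1.2
      rw [cnt_eq_card fun x hx => (Multiset.mem_cons.1 hx).elim (fun h => h.le) (hb x),
        Multiset.card_cons, hucard] at h1
      have h2 : cnt b v = v.card := le_antisymm (cnt_le_card _ _) (by omega)
      have h3 := Multiset.countP_eq_card.1 h2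
      exact ⟨fun x hx => Finset.mem_Icc.2 ⟨(Finset.mem_Icc.1 (hv1.1 x hx)).1, h3 x hx⟩, hv1.2⟩
    have hgood := hG b hb1.2 (k + 1) hk
    by_contra hcon
    have hleads : ∀ f ∈ monSpan M (sig 0 '' dom m (b ::ₘ w)), ∀ e, IsLead f e →
        e ∈ (D.erase (b ::ₘ w)).image (multisetToExp (m + d + 1)) := by
      intro f hf e he
      have hhom : f.IsHomogeneous (k + 1) := isHomogeneous_of_mem_monSpan (by
        rintro _ ⟨v, hv, rfl⟩
        rw [hdom] at hv
        exact sig_mem_Mon zero_le_one hk (Finset.mem_filter.1 hv).1) hf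
      have hv2 := unexp_mem_Mon hhom he.1
      rw [← multisetToExp_unexp e] at he ⊢
      set v := unexp e with hv
      obtain ⟨w', hw', hw's⟩ := hgood.exists_mem_support (f := f)
        (Submodule.span_mono (Set.image_mono (Finset.coe_subset.2 hDb)) (hspan ▸ hf))
        (by rintro rfl; simpa using he.1)
      have hvb := he.le_of_mem hv2 (Mon_mono (by omega) hw')
        (fun x hx => (Finset.mem_Icc.1 ((mem_Mon.1 hw').1 x hx)).2) hw's
      have hvm : ∀ x ∈ v, x ∈ Finset.Icc 1 m := fun x hx => Finset.mem_Icc.2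
        ⟨(Finset.mem_Icc.1 ((mem_Mon.1 hv2).1 x hx)).1, (hvb x hx).trans hb1.2⟩
      have hfI : f ∈ ballIdeal (d := d) M U' := by
        refine mem_map_of_mem_monSpan ?_ hf
        rintro _ ⟨v', hv', rfl⟩
        rw [hdom] at hv'
        obtain ⟨hv'1, hv'2⟩ := Finset.mem_filter.1 hv'
        refine ⟨sig_mem_Icc zero_le_one hk hv'1, fun hball => ?_⟩
        refine (hnot v' (mem_Mon.1 hv'1).1).2 (fun c hc => (hcntw c).trans (hv'2 c hc)) ?_
        exact hU'c.mem_of_sig_mem_ballq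
          (fun x hx => (Finset.mem_Icc.1 ((mem_Mon.1 hv'1).1 x hx)).2) hball
      have hvU := filter_notMem_of_hasLead hM hk hyp hv2 ⟨f, hfI, he⟩
      rw [Multiset.filter_eq_self.2 fun x hx => (Finset.mem_Icc.1 (hvm x hx)).2, hnot v hvm] at hvU
      refine Finset.mem_image_of_mem _ (Finset.mem_erase.2 ⟨?_, Finset.mem_filter.2
        ⟨mem_Mon.2 ⟨hvm, (mem_Mon.1 hv2).2⟩, fun c hc => ?_⟩⟩)
      · intro heq
        rw [heq] at he
        exact hcon ⟨f, hf, he⟩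
      · by_cases hbc : b ≤ c
        · rw [cnt_eq_card fun x hx => (hvb x hx).trans hbc, (mem_Mon.1 hv2).2]
          exact (cnt_le_card _ _).trans (by rw [Multiset.card_cons, hucard])
        · rw [cnt_cons, if_neg hbc]
          exact hvU c hc
    have h1 := finrank_le_card_of_leads _ hleads
    rw [hspan] at h1
    have h2 := hgood.card_le_finrank D hDb
    have h3 : b ::ₘ w ∈ D := Finset.mem_filter.2 ⟨hu, fun _ _ => le_rfl⟩
    have h4 := Finset.card_image_le (s := D.erase (b ::ₘ w)) (f := multisetToExp (m + d + 1))
    have h5 := Finset.card_erase_lt_of_mem h3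
    omega

end Leads

section Generic

variable {m d : ℕ} {K : Type*} [Field K]

theorem eps_le_one (X : Set (Multiset ℕ)) (u : Multiset ℕ) : eps X u ≤ 1 := by
  unfold eps; split_ifs <;> omega

theorem exists_good_matrix_poly [Infinite K] {c k : ℕ} (hc : c ≤ m) (hk : k ≤ d / 2 + 1)
    (X' : Set (Multiset ℕ)) (hX : ∀ u i j, i < j → j ≤ c → i ::ₘ u ∈ X' → j ::ₘ u ∈ X') :
    ∃ p : MvPolynomial (Fin (m + d + 1) × Fin (m + d + 1)) K, p ≠ 0 ∧
      ∀ M : Matrix (Fin (m + d + 1)) (Fin (m + d + 1)) K, eval (fun q => M q.1 q.2) p ≠ 0 →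
        Good c k fun u => genLin M (mon (m + d + 1) K (sig (eps X' u) u)) := by
  have hIcc : ∀ u ∈ Mon c k, ∀ x ∈ sig (eps X' u) u, x ∈ Finset.Icc 1 (m + d + 1) :=
    fun u hu => sig_mem_Icc (eps_le_one X' u) hk (Mon_mono hc hu)
  obtain ⟨p, hp⟩ := exists_good_poly (K := K) c k fun u =>
    pr (cols (Matrix.mvPolynomialX (Fin (m + d + 1)) (Fin (m + d + 1)) K)) (sig (eps X' u) u)
  have hp' : ∀ M : Matrix (Fin (m + d + 1)) (Fin (m + d + 1)) K,
      eval (fun q => M q.1 q.2) p ≠ 0 ↔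
        Good c k fun u => genLin M (mon (m + d + 1) K (sig (eps X' u) u)) := by
    intro M
    rw [hp]
    apply good_congr
    intro u hu
    rw [map_pr, genLin_mon M (hIcc u hu)]
    congr 1
    funext a i
    unfold cols
    split_ifs <;> simp [Matrix.mvPolynomialX_apply]
  refine ⟨p, ?_, fun M => (hp' M).1⟩
  obtain ⟨l, hl⟩ := exists_good (K := K) (N := m + d + 1) c c (by omega) le_rfl k X' hX
  rintro rfl
  refine (hp' (Matrix.of fun i b => l (b + 1) i)).2 ?_ (map_zero _)
  refine (good_congr fun u hu => ?_).1 hl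
  rw [genLin_mon _ (hIcc u hu)]
  refine pr_congr fun a ha => ?_
  have := Finset.mem_Icc.1 (hIcc u hu a ha)
  funext i
  rw [cols, dif_pos (by omega), Matrix.of_apply]
  simp only [Nat.sub_add_cancel this.1]

theorem exists_generic_matrix [Infinite K] {U : Set (Multiset ℕ)} (hU : ShiftClosed m U)
    {p : MvPolynomial (Fin (m + d + 1) × Fin (m + d + 1)) K} (hp : p ≠ 0) :
    ∃ M : Matrix (Fin (m + d + 1)) (Fin (m + d + 1)) K, eval (fun q => M q.1 q.2) p ≠ 0 ∧
      IsUnit M.det ∧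
      (∀ c ≤ m, ∀ k ≤ d / 2 + 1, Good c k fun u => genLin M (mon (m + d + 1) K (sig 0 u))) ∧
      Good m (d / 2 + 1) fun u => genLin M (mon (m + d + 1) K (sig (eps U u) u)) := by
  obtain ⟨r, hr, hr'⟩ := exists_good_matrix_poly (K := K) (m := m) (d := d) le_rfl le_rfl U hU.shift
  have hq : ∀ c k : ℕ, ∃ q : MvPolynomial (Fin (m + d + 1) × Fin (m + d + 1)) K, q ≠ 0 ∧
      (c ≤ m → k ≤ d / 2 + 1 → ∀ M : Matrix (Fin (m + d + 1)) (Fin (m + d + 1)) K,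
        eval (fun q => M q.1 q.2) q ≠ 0 →
          Good c k fun u => genLin M (mon (m + d + 1) K (sig 0 u))) := by
    intro c k
    by_cases h : c ≤ m ∧ k ≤ d / 2 + 1
    · obtain ⟨q, hq, hq'⟩ := exists_good_matrix_poly (K := K) h.1 h.2 ∅
        (fun _ _ _ _ _ h => h.elim)
      refine ⟨q, hq, fun _ _ M hM => ?_⟩
      simpa [eps] using hq' M hM
    · exact ⟨1, one_ne_zero, fun hc hk => absurd ⟨hc, hk⟩ h⟩
  choose q hq hq' using hq
  have hdet := Matrix.det_mvPolynomialX_ne_zero (Fin (m + d + 1)) K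
  obtain ⟨x, hx⟩ := exists_eval_ne_zero (mul_ne_zero (mul_ne_zero hp hr) (mul_ne_zero hdet
    (Finset.prod_ne_zero_iff.2 fun s (_ : s ∈ Finset.range (m + 1) ×ˢ Finset.range (d / 2 + 2)) =>
      hq s.1 s.2)))
  simp only [map_mul, map_prod, mul_ne_zero_iff, Finset.prod_ne_zero_iff] at hx
  obtain ⟨⟨h1, h2⟩, h3, h4⟩ := hx
  refine ⟨Matrix.of fun i j => x (i, j), h1, ?_, fun c hc k hk => hq' c k hc hk _ (h4 (c, k) ?_),
    hr' _ h2⟩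
  · rw [isUnit_iff_ne_zero]
    convert h3
    rw [RingHom.map_det]
    congr 1
    ext i j
    simp
  · rw [Finset.mem_product, Finset.mem_range, Finset.mem_range]
    omega

theorem Good.exists_lead {N k : ℕ} (hm : m ≤ N) {M : Matrix (Fin N) (Fin N) K}
    {s : Multiset ℕ → Multiset ℕ} (hs : ∀ u ∈ Mon m k, s u ∈ Mon N k)
    (hV : Good m k fun u => genLin M (mon N K (s u))) {w : Multiset ℕ} (hw : w ∈ Mon m k) :
    HasLead (monSpan M (s '' (Mon m k : Set (Multiset ℕ)))) w := by
  classical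
  have htop := hV.span_eq_top_of_card_eq_finrank' (by simp)
  have hmem : Pi.single ⟨w, hw⟩ 1 ∈ Submodule.map (rest N K m k)
      (monSpan M (s '' (Mon m k : Set (Multiset ℕ)))) := by
    rw [monSpan, Submodule.map_span]
    refine Submodule.span_mono ?_ (htop ▸ Submodule.mem_top)
    rintro _ ⟨u, rfl⟩
    exact ⟨_, ⟨_, ⟨u, u.2, rfl⟩, rfl⟩, rfl⟩
  obtain ⟨g, hg, hgw⟩ := hmem
  have hcoeff : ∀ v (hv : v ∈ Mon m k),
      coeff (multisetToExp N v) g = (Pi.single ⟨w, hw⟩ 1 : Mon m k → K) ⟨v, hv⟩ := fun v hv => by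
    rw [← hgw, rest_apply]
  have hwg : multisetToExp N w ∈ g.support := by
    rw [mem_support_iff, hcoeff w hw, Pi.single_eq_same]
    exact one_ne_zero
  have hhom : g.IsHomogeneous k := isHomogeneous_of_mem_monSpan (by
    rintro _ ⟨u, hu, rfl⟩; exact hs u hu) hg
  obtain ⟨e, he⟩ := exists_isLead (f := g) (by rintro rfl; simp at hwg)
  refine ⟨g, hg, ?_⟩
  have hv := unexp_mem_Mon hhom he.1
  rw [← multisetToExp_unexp e] at he
  set v := unexp e
  have hvm := he.le_of_mem hv (Mon_mono hm hw)
    (fun x hx => (Finset.mem_Icc.1 ((mem_Mon.1 hw).1 x hx)).2) hwg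
  have hv' : v ∈ Mon m k := mem_Mon.2 ⟨fun x hx => Finset.mem_Icc.2
    ⟨(Finset.mem_Icc.1 ((mem_Mon.1 hv).1 x hx)).1, hvm x hx⟩, (mem_Mon.1 hv).2⟩
  have hne := mem_support_iff.1 he.1
  rw [hcoeff v hv'] at hne
  have : v = w := by
    by_contra h
    exact hne (Pi.single_eq_of_ne (fun h' => h (congrArg Subtype.val h')) _)
  rwa [this] at he

theorem hasLead_sphere_iff {U : Set (Multiset ℕ)} (hU : ShiftClosed m U)
    (hdeg : ∀ u ∈ U, 2 * u.card ≤ d + 1)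
    {M : Matrix (Fin (m + d + 1)) (Fin (m + d + 1)) K} (hM : IsUnit M.det)
    (hG : ∀ c ≤ m, ∀ k ≤ d / 2 + 1, Good c k fun u => genLin M (mon (m + d + 1) K (sig 0 u)))
    (hGU : Good m (d / 2 + 1) fun u => genLin M (mon (m + d + 1) K (sig (eps U u) u)))
    {u : Multiset ℕ} (hu : ∀ x ∈ u, x ∈ Finset.Icc 1 m) :
    HasLead (Ideal.map (genLin M)
        (srIdeal K (m + d + 1) (complexBoundary d (ballq m d U)))) u ↔
      ¬ (u ∈ U ∧ u.card ≤ d / 2) := by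
  have hle : ∀ {w : Multiset ℕ} {k : ℕ}, w ∈ Mon m k → ∀ x ∈ w, x ≤ m :=
    fun hw x hx => (Finset.mem_Icc.1 ((mem_Mon.1 hw).1 x hx)).2
  have hball : ∀ v, (∀ x ∈ v, x ∈ Finset.Icc 1 m) → v.card ≤ d / 2 → v ∉ U →
      HasLead (ballIdeal (d := d) M U) v := fun v hv hc hvU =>
    hasLead_ballIdeal_of_dom hU (k := v.card) (by omega) (mem_Mon.2 ⟨hv, rfl⟩) hvU
      (hasLead_dom hM hG _ (by omega) v (mem_Mon.2 ⟨hv, rfl⟩))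
  constructor
  · rintro ⟨f, hf, hl⟩ ⟨huU, hc⟩
    have huN : u ∈ Mon (m + d + 1) u.card := Mon_mono (by omega) (mem_Mon.2 ⟨hu, rfl⟩)
    obtain ⟨g, hg, hgl⟩ := exists_monSpan_lead hM
      (fun F hF G hGF => hF.imp fun H hH => ⟨hGF.trans hH.1, hH.2⟩) hf hl
    refine filter_notMem_of_hasLead hM (d := d) (k := u.card) (by omega)
      (fun v hv hvc => hball v hv (by omega)) huN ⟨g, mem_map_of_mem_monSpan ?_ hg, hgl⟩ ?_
    · rintro w ⟨hw1, hw2⟩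
      rw [degree_multisetToExp (mem_Mon.1 huN).1, mem_Mon] at hw1
      refine ⟨hw1.1, fun hb => hw2 (mem_complexBoundary_of_card_le hU hdeg hb ?_)⟩
      exact (Multiset.toFinset_card_le w).trans (by omega)
    · rwa [Multiset.filter_eq_self.2 fun x hx => (Finset.mem_Icc.1 (hu x hx)).2]
  · intro h
    by_cases hc : u.card ≤ d / 2
    · obtain ⟨f, hf, hl⟩ := hball u hu hc fun huU => h ⟨huU, hc⟩
      refine ⟨f, Ideal.map_mono (Ideal.span_mono ?_) hf, hl⟩
      rintro _ ⟨F, h1, h2, rfl⟩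
      exact ⟨F, h1, fun hF => h2 (complexBoundary_ballq_subset m d U hF), rfl⟩
    · obtain ⟨w, hwu, hwc⟩ : ∃ w ≤ u, w.card = d / 2 + 1 := by
        refine ⟨(u.toList.take (d / 2 + 1) : List ℕ), ?_, by simp; omega⟩
        conv_rhs => rw [← u.coe_toList]
        exact (List.take_sublist _ _).subperm
      have hw : w ∈ Mon m (d / 2 + 1) :=
        mem_Mon.2 ⟨fun x hx => hu x (Multiset.mem_of_le hwu hx), hwc⟩
      refine exists_lead_of_le hwu ?_
      obtain ⟨f, hf, hl⟩ := hGU.exists_lead (by omega)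
        (fun v hv => sig_mem_Mon (eps_le_one U v) le_rfl hv) hw
      refine ⟨f, mem_map_of_mem_monSpan ?_ hf, hl⟩
      rintro _ ⟨v, hv, rfl⟩
      refine ⟨sig_mem_Icc (eps_le_one U v) le_rfl hv, ?_⟩
      have hvc := (mem_Mon.1 hv).2
      by_cases hvU : v ∈ U
      · simp only [eps, if_pos hvU]
        have := hdeg v hvU
        exact sig_one_notMem_complexBoundary hU hvU (by omega)
      · simp only [eps, if_neg hvU]
        exact fun hb => hvU (hU.mem_of_sig_mem_ballq (hle hv)
          (complexBoundary_ballq_subset m d U hb))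

end Generic

theorem _root_.IsShiftedOrderIdeal.shiftClosed {m : ℕ} {U : Set (Multiset ℕ)}
    (hU : IsShiftedOrderIdeal m U) : ShiftClosed m U where
  le_of_mem u hu x hx := (Finset.mem_Icc.1 (hU.1 u hu x hx)).2
  down := hU.2.2.2.1
  shift := hU.2.2.2.2

end SqueezedGin

/-- from Lemma 5.6 and the final remark. In characteristic `0`,
`U(S_d(U)) = {u ∈ U : deg u ≤ d/2}`, where
`U(Γ) = {monomials u in x_1,…,x_{n-d-1} : u ∉ Gin(I_Γ)}`. -/
theorem stmt19 (n d : ℕ) (hd : 0 < d) (hdn : d < n) (U : Set (Multiset ℕ))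
    (hU : IsShiftedOrderIdeal (n - d - 1) U)
    (hdeg : ∀ u ∈ U, 2 * Multiset.card u ≤ d + 1)
    (K : Type) [Field K] (hK : CharZero K)
    (J : Ideal (MvPolynomial (Fin n) K))
    (hJ : IsGin (srIdeal K n (squeezedSphere n d U)) J) :
    {u : Multiset ℕ | (∀ i ∈ u, i ∈ Finset.Icc 1 (n - d - 1)) ∧
        MvPolynomial.monomial (multisetToExp n u) (1 : K) ∉ J} =
      {u ∈ U | Multiset.card u ≤ d / 2} := by
  obtain ⟨m, rfl⟩ : ∃ m, n = m + d + 1 := ⟨n - d - 1, by omega⟩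
  have hm : m + d + 1 - d - 1 = m := by omega
  rw [hm] at hU ⊢
  obtain ⟨p, hp, hJ⟩ := hJ
  obtain ⟨M, hMp, hM, hG, hGU⟩ :=
    SqueezedGin.exists_generic_matrix (d := d) hU.shiftClosed hp
  have key : ∀ u : Multiset ℕ, (∀ i ∈ u, i ∈ Finset.Icc 1 m) →
      (MvPolynomial.monomial (multisetToExp (m + d + 1) u) (1 : K) ∉ J ↔
        u ∈ U ∧ u.card ≤ d / 2) := by
    intro u hu
    rw [← hJ M hM hMp, SqueezedGin.monomial_mem_initialIdeal_iff, squeezedSphere,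
      SqueezedGin.squeezedBall_eq m d U hdeg]
    exact not_iff_comm.1
      (SqueezedGin.hasLead_sphere_iff hU.shiftClosed hdeg hM hG hGU hu).symm
  ext u
  constructor
  · rintro ⟨hu, huJ⟩
    exact (key u hu).1 huJ
  · intro h
    exact ⟨hU.1 u h.1, (key u (hU.1 u h.1)).2 h⟩
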